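/- arXiv:2403.19388 — 2 statements merged into one kernel-verified Lean document; each statement's English description precedes it below -/
import Mathlib

section
/- Let G be a finite group, A, B ⊆ G∖{1} symmetric generating sets (A = A^{−1}, B = B^{−1}) with gag^{−1} ≠ b for all a ∈ A, b ∈ B, g ∈ G, let 𝔽 be a finite field, let C_A ⊆ 𝔽^A and C_B ⊆ 𝔽^B be linear codes, set Σ = C_A⊗C_B, and let Z^0 ⊆ Σ^G be the code of ensembles (m_g)_{g∈G} satisfying r_a(m_g) = r_{a^{−1}}(m_{ag}) and c_b(m_g) = c_{b^{−1}}(m_{gb}) for all g ∈ G, a ∈ A, b ∈ B. Let ε ∈ (0,1] and assume: (1a) δ(C_A) ≥ ε; (1b) δ(C_B) ≥ ε; (1c) C_A⊗C_B is ε-agreement testable; (2) the Cayley graphs Cay(A,G) and Cay(G,B), with their natural weight functions, are (ε²/2500)-expanders. Then: (i) every nonzero m ∈ Z^0 satisfies #{g ∈ G : m_g ≠ 0}/|G| ≥ 0.9996·ε (so δ(Z^0) ≥ 0.9996·ε); (ii) dim_𝔽 Z^0 ≥ |G|·(dim_𝔽 C_A · dim_𝔽 C_B − (3/4)|A||B|),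 equivalently r(Z^0) ≥ (4·r(C_A)·r(C_B) − 3)/(4·r(C_A)·r(C_B)); (iii) for every f ∈ Σ^G, the number V(f) of edges of Cay(A,G,B) whose constraint f violates (edges {g,ag} with r_a(f(g)) ≠ r_{a^{−1}}(f(ag)), and edges {g,gb} with c_b(f(g)) ≠ c_{b^{−1}}(f(gb))) satisfies V(f)/(|G|·(|A|+|B|)/2) ≥ μ·dist(f, Z^0), where μ = 1/( max{|A|/|B|, |B|/|A|}·(250000·ε^{−3} + 4800·max{|A|,|B|}·ε^{−1}) ). -/
open scoped Classical

noncomputable section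

namespace FK6

variable {𝔽 : Type*} [Field 𝔽]

/-- The tensor code `C_A ⊗ C_B`, viewed as the space of matrices all of whose rows lie
in `C_B` and all of whose columns lie in `C_A`. -/
def tensorCode {A B : Type*} (CA : Submodule 𝔽 (A → 𝔽)) (CB : Submodule 𝔽 (B → 𝔽)) :
    Submodule 𝔽 (A → B → 𝔽) where
  carrier := {m | (∀ a : A, m a ∈ CB) ∧ ∀ b : B, (fun a => m a b) ∈ CA}
  add_mem' := by
    intro m₁ m₂ h₁ h₂
    exact ⟨fun a => CB.add_mem (h₁.1 a) (h₂.1 a), fun b => CA.add_mem (h₁.2 b) (h₂.2 b)⟩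
  zero_mem' := ⟨fun a => CB.zero_mem, fun b => CA.zero_mem⟩
  smul_mem' := by
    intro c m hm
    exact ⟨fun a => CB.smul_mem c (hm.1 a), fun b => CA.smul_mem c (hm.2 b)⟩

/-- `κ`-agreement testability of the tensor code `C_A ⊗ C_B`. -/
def AgreementTestable {A B : Type*} [Fintype A] [Fintype B]
    (CA : Submodule 𝔽 (A → 𝔽)) (CB : Submodule 𝔽 (B → 𝔽)) (κ : ℝ) : Prop :=
  ∀ m₁ m₂ : A → B → 𝔽,
    (∀ b : B, (fun a => m₁ a b) ∈ CA) → (∀ a : A, m₂ a ∈ CB) →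
    ∃ m ∈ tensorCode CA CB,
      κ * (((Finset.univ.filter fun a : A => m₂ a ≠ m a).card : ℝ) /
            (2 * (Fintype.card A : ℝ)) +
          ((Finset.univ.filter fun b : B => (fun a => m₁ a b) ≠ fun a => m a b).card : ℝ) /
            (2 * (Fintype.card B : ℝ)))
        ≤ ((Finset.univ.filter fun p : A × B => m₁ p.1 p.2 ≠ m₂ p.1 p.2).card : ℝ) /
            ((Fintype.card A : ℝ) * (Fintype.card B : ℝ))

variable {G : Type*} [Group G] [Fintype G] [DecidableEq G]

/-- The `0`-cocycle code `Z⁰(X, 𝓕)` of the sheaf `𝓕` on the double Cayley complex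
`Cay(A, G, B)`: ensembles of tensor codewords satisfying
`r_a(m_g) = r_{a⁻¹}(m_{ag})` and `c_b(m_g) = c_{b⁻¹}(m_{gb})`. -/
def Z0 (A B : Finset G) (CA : Submodule 𝔽 (↥A → 𝔽)) (CB : Submodule 𝔽 (↥B → 𝔽))
    (hA : ∀ a ∈ A, a⁻¹ ∈ A) (hB : ∀ b ∈ B, b⁻¹ ∈ B) :
    Submodule 𝔽 (G → ↥A → ↥B → 𝔽) where
  carrier := {m | (∀ g : G, m g ∈ tensorCode CA CB) ∧
    ∀ (g : G) (a : ↥A) (b : ↥B),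
      m g a b = m ((a : G) * g) ⟨(a : G)⁻¹, hA _ a.2⟩ b ∧
      m g a b = m (g * (b : G)) a ⟨(b : G)⁻¹, hB _ b.2⟩}
  add_mem' := by
    intro m₁ m₂ h₁ h₂
    refine ⟨fun g => (tensorCode CA CB).add_mem (h₁.1 g) (h₂.1 g), fun g a b => ?_⟩
    constructor
    · simp only [Pi.add_apply]
      rw [(h₁.2 g a b).1, (h₂.2 g a b).1]
    · simp only [Pi.add_apply]
      rw [(h₁.2 g a b).2, (h₂.2 g a b).2]
  zero_mem' := ⟨fun _ => Submodule.zero_mem _, fun _ _ _ => ⟨rfl, rfl⟩⟩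
  smul_mem' := by
    intro c m hm
    refine ⟨fun g => (tensorCode CA CB).smul_mem c (hm.1 g), fun g a b => ?_⟩
    constructor
    · simp only [Pi.smul_apply]
      rw [(hm.2 g a b).1]
    · simp only [Pi.smul_apply]
      rw [(hm.2 g a b).2]

/-- The set of edges of the double Cayley complex `Cay(A, G, B)` whose constraint is
violated by the word `f`. -/
def violatedEdges (A B : Finset G) (hA : ∀ a ∈ A, a⁻¹ ∈ A) (hB : ∀ b ∈ B, b⁻¹ ∈ B)
    (f : G → ↥A → ↥B → 𝔽) : Finset (Finset G) :=
  Finset.univ.filter fun e =>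
    (∃ (g : G) (a : ↥A), e = {g, (a : G) * g} ∧
        f g a ≠ f ((a : G) * g) ⟨(a : G)⁻¹, hA _ a.2⟩) ∨
    ∃ (g : G) (b : ↥B), e = {g, g * (b : G)} ∧
        (fun a => f g a b) ≠ fun a => f (g * (b : G)) a ⟨(b : G)⁻¹, hB _ b.2⟩

/-- The left Cayley graph `Cay(A, G)`, with its natural weight function, is a
`λ`-expander: every eigenvalue of its weighted adjacency operator on the space of
mean-zero functions is at most `λ`. -/
def IsLeftCayleyExpander (A : Finset G) (lam : ℝ) : Prop :=
  ∀ (μ : ℝ) (f : G → ℝ), f ≠ 0 → (∑ g : G, f g) = 0 →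
    (∀ g : G, (∑ a ∈ A, f (a * g)) / (A.card : ℝ) = μ * f g) → μ ≤ lam

/-- The right Cayley graph `Cay(G, B)`, with its natural weight function, is a
`λ`-expander. -/
def IsRightCayleyExpander (B : Finset G) (lam : ℝ) : Prop :=
  ∀ (μ : ℝ) (f : G → ℝ), f ≠ 0 → (∑ g : G, f g) = 0 →
    (∀ g : G, (∑ b ∈ B, f (g * b)) / (B.card : ℝ) = μ * f g) → μ ≤ lam


set_option linter.unusedSectionVars false

section Abs

variable {V I S R : Type*} [Fintype V] [Fintype I]

/-- Indicator that the constraint at the ordered edge `(g, i)` is violated. -/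
def bad (ρ : I → S → R) (σ : I → V → V) (inv : I → I) (f : V → S) (g : V) (i : I) : ℝ :=
  if ρ i (f g) ≠ ρ (inv i) (f (σ i g)) then 1 else 0

lemma bad_nonneg (ρ : I → S → R) (σ : I → V → V) (inv : I → I) (f : V → S) (g : V) (i : I) :
    0 ≤ bad ρ σ inv f g i := by
  unfold bad; split_ifs <;> norm_num

/-- Indicator that the constraint at `(g, i)` would be violated if the value at `g` were `m`. -/
def badAt (ρ : I → S → R) (σ : I → V → V) (inv : I → I) (f : V → S) (g : V) (m : S) (i : I) : ℝ :=
  if ρ i m ≠ ρ (inv i) (f (σ i g)) then 1 else 0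

lemma sum_bad_update [DecidableEq V] (ρ : I → S → R) (σ : I → V → V) (inv : I → I)
    (hinv : ∀ i, inv (inv i) = i) (hσ : ∀ i g, σ (inv i) (σ i g) = g)
    (hne : ∀ i g, σ i g ≠ g) (f : V → S) (g₀ : V) (m : S) :
    ∑ g, ∑ i, bad ρ σ inv (Function.update f g₀ m) g i =
      ∑ g, ∑ i, bad ρ σ inv f g i +
        2 * (∑ i, badAt ρ σ inv f g₀ m i -
          ∑ i, bad ρ σ inv f g₀ i) := by
  set f' := Function.update f g₀ m with hf'
  have hσ' : ∀ i g, σ i (σ (inv i) g) = g := fun i g => by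
    have := hσ (inv i) g; rwa [hinv] at this
  have hat : ∀ i, badAt ρ σ inv f g₀ m i
      = bad ρ σ inv f' g₀ i := by
    intro i
    simp [bad, badAt, hf', Function.update_of_ne (hne i g₀)]
  have hsym : ∀ (F : V → S) i, bad ρ σ inv F (σ (inv i) g₀) i = bad ρ σ inv F g₀ (inv i) := by
    intro F i
    simp only [bad, hσ', hinv]
    congr 1
    rw [ne_comm]
  have key : ∀ i, ∑ g, (bad ρ σ inv f' g i - bad ρ σ inv f g i) =
      (bad ρ σ inv f' g₀ i - bad ρ σ inv f g₀ i) +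
      (bad ρ σ inv f' g₀ (inv i) - bad ρ σ inv f g₀ (inv i)) := by
    intro i
    rw [← Finset.sum_subset (Finset.subset_univ {g₀, σ (inv i) g₀}),
      Finset.sum_pair (hne (inv i) g₀).symm, hsym, hsym]
    intro g _ hg
    simp only [Finset.mem_insert, Finset.mem_singleton, not_or] at hg
    have h2 : σ i g ≠ g₀ := by
      intro h; apply hg.2; rw [← h, hσ]
    simp [bad, hf', Function.update_of_ne hg.1, Function.update_of_ne h2]
  have hre : ∑ i, (bad ρ σ inv f' g₀ (inv i) - bad ρ σ inv f g₀ (inv i)) =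
      ∑ i, (bad ρ σ inv f' g₀ i - bad ρ σ inv f g₀ i) :=
    Equiv.sum_comp (Function.Involutive.toPerm inv hinv)
      (fun i => bad ρ σ inv f' g₀ i - bad ρ σ inv f g₀ i)
  have tot : ∑ i, ∑ g, (bad ρ σ inv f' g i - bad ρ σ inv f g i) =
      2 * ∑ i, (bad ρ σ inv f' g₀ i - bad ρ σ inv f g₀ i) := by
    rw [Finset.sum_congr rfl (fun i _ => key i), Finset.sum_add_distrib, hre]; ring
  rw [Finset.sum_comm] at tot
  simp only [Finset.sum_sub_distrib] at tot
  simp only [hat]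
  linarith

/-- Spectral bound for a symmetric operator fixing the constants. -/
lemma spectral (T : (V → ℝ) →ₗ[ℝ] (V → ℝ)) (hsymm : ∀ u v, ∑ g, T u g * v g = ∑ g, u g * T v g)
    (hone : T (fun _ => 1) = fun _ => 1) (lam : ℝ) (hlam : 0 ≤ lam)
    (hT : ∀ (μ : ℝ) (f : V → ℝ), f ≠ 0 → ∑ g, f g = 0 → (∀ g, T f g = μ * f g) → μ ≤ lam)
    (u : V → ℝ) :
    ∑ g, T u g * u g ≤ lam * ∑ g, u g ^ 2 + (∑ g, u g) ^ 2 / (Fintype.card V : ℝ) := by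
  rcases isEmpty_or_nonempty V with hV | hV
  · simp
  have hn : (0 : ℝ) < Fintype.card V := by exact_mod_cast Fintype.card_pos
  let J : (V → ℝ) →ₗ[ℝ] (V → ℝ) :=
    { toFun := fun v _ => (∑ g, v g) / (Fintype.card V : ℝ)
      map_add' := by intro x y; ext; simp [Finset.sum_add_distrib, add_div]
      map_smul' := by intro c x; ext; simp [← Finset.mul_sum, mul_div_assoc] }
  have hJ : ∀ v g, J v g = (∑ g, v g) / (Fintype.card V : ℝ) := fun _ _ => rfl
  let S : (V → ℝ) →ₗ[ℝ] (V → ℝ) := lam • LinearMap.id - T + J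
  have hS : ∀ v g, S v g = lam * v g - T v g + (∑ g, v g) / (Fintype.card V : ℝ) := fun _ _ => rfl
  have hSsymm : ∀ u v, ∑ g, S u g * v g = ∑ g, u g * S v g := by
    intro u v
    simp only [hS, add_mul, sub_mul, mul_add, mul_sub, Finset.sum_add_distrib,
      Finset.sum_sub_distrib, hsymm u v, ← Finset.mul_sum, ← Finset.sum_mul]
    congr 1
    · congr 1
      exact Finset.sum_congr rfl fun g _ => by ring
    · ring
  let M : Matrix V V ℝ := LinearMap.toMatrix' S
  have hMv : ∀ v, M.mulVec v = S v := fun v => LinearMap.toMatrix'_mulVec S v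
  have hH : M.IsHermitian := by
    ext i j
    have := hSsymm (Pi.single i 1) (Pi.single j 1)
    simp only [Pi.single_apply, mul_ite, mul_one, mul_zero, ite_mul, one_mul, zero_mul,
      Finset.sum_ite_eq', Finset.mem_univ, if_true] at this
    simp only [Matrix.conjTranspose_apply, star_trivial, M, LinearMap.toMatrix'_apply]
    simpa using this
  have hpsd : M.PosSemidef := by
    rw [hH.posSemidef_iff_eigenvalues_nonneg]
    intro i
    by_contra hneg
    simp only [Pi.zero_apply, not_le] at hneg
    set μ := hH.eigenvalues i with hμ
    set v : V → ℝ := (hH.eigenvectorBasis i).ofLp with hv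
    have hev : S v = μ • v := by
      rw [← hMv]; exact hH.mulVec_eigenvectorBasis i
    have hv0 : v ≠ 0 := by
      intro h
      have := hH.eigenvectorBasis.orthonormal.ne_zero i
      apply this
      ext g
      exact congrFun h g
    have hsum : ∑ g, v g = 0 := by
      have h1 := hSsymm v (fun _ => 1)
      have h2 : S (fun _ => 1) = fun _ => lam := by
        ext g
        rw [hS, hone]
        simp only [Finset.sum_const, Finset.card_univ, nsmul_eq_mul, mul_one]
        field_simp
        ring
      rw [h2, hev] at h1
      simp only [Pi.smul_apply, smul_eq_mul, mul_one, ← Finset.mul_sum, ← Finset.sum_mul] at h1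
      have h3 : (lam - μ) * ∑ g, v g = 0 := by linarith
      rcases mul_eq_zero.1 h3 with h | h
      · linarith
      · exact h
    have := hT (lam - μ) v hv0 hsum (by
      intro g
      have := congrFun hev g
      rw [hS, hsum] at this
      simp only [Pi.smul_apply, smul_eq_mul, zero_div, add_zero] at this
      linarith)
    linarith
  have h := hpsd.dotProduct_mulVec_nonneg u
  rw [hMv] at h
  simp only [dotProduct, star_trivial, hS, mul_add, mul_sub, Finset.sum_add_distrib,
      Finset.sum_sub_distrib, ← Finset.sum_mul] at h
  have e1 : ∑ g, u g * (lam * u g) = lam * ∑ g, u g ^ 2 := by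
    rw [Finset.mul_sum]; exact Finset.sum_congr rfl fun g _ => by ring
  have e2 : ∑ g, u g * T u g = ∑ g, T u g * u g := (hsymm u u).symm
  have e3 : (∑ g, u g) * ((∑ g, u g) / (Fintype.card V : ℝ))
     = (∑ g, u g) ^ 2 / (Fintype.card V : ℝ) := by ring
  rw [e1, e2, e3] at h
  linarith

/-- Averaging operator. -/
def avg (σ : I → V → V) : (V → ℝ) →ₗ[ℝ] (V → ℝ) where
  toFun u g := (∑ i, u (σ i g)) / (Fintype.card I : ℝ)
  map_add' := by intro x y; ext; simp [Finset.sum_add_distrib, add_div]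
  map_smul' := by intro c x; ext; simp [← Finset.mul_sum, mul_div_assoc]

lemma avg_apply (σ : I → V → V) (u : V → ℝ) (g : V) :
    avg σ u g = (∑ i, u (σ i g)) / (Fintype.card I : ℝ) := rfl

lemma avg_symm (σ : I → V → V) (inv : I → I)
    (hinv : ∀ i, inv (inv i) = i) (hσ : ∀ i g, σ (inv i) (σ i g) = g) (u v : V → ℝ) :
    ∑ g, avg σ u g * v g = ∑ g, u g * avg σ v g := by
  have hσ' : ∀ i g, σ i (σ (inv i) g) = g := fun i g => by
    have := hσ (inv i) g; rwa [hinv] at this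
  simp only [avg_apply, div_mul_eq_mul_div, mul_div_assoc', ← Finset.sum_div, Finset.sum_mul,
    Finset.mul_sum]
  congr 1
  rw [Finset.sum_comm]
  conv_rhs => rw [Finset.sum_comm]
  rw [← Equiv.sum_comp (Function.Involutive.toPerm inv hinv)]
  refine Finset.sum_congr rfl fun i _ => ?_
  let E : V ≃ V := ⟨σ i, σ (inv i), hσ i, hσ' i⟩
  rw [← Equiv.sum_comp E]
  refine Finset.sum_congr rfl fun g _ => ?_
  change u (σ (inv i) (σ i g)) * v (σ i g) = u g * v (σ i g)
  rw [hσ]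

lemma avg_bound [Nonempty I] (σ : I → V → V) (inv : I → I)
    (hinv : ∀ i, inv (inv i) = i) (hσ : ∀ i g, σ (inv i) (σ i g) = g) (lam : ℝ) (hlam : 0 ≤ lam)
    (hT : ∀ (μ : ℝ) (f : V → ℝ), f ≠ 0 → ∑ g, f g = 0 → (∀ g, avg σ f g = μ * f g) → μ ≤ lam)
    (u : V → ℝ) :
    ∑ g, avg σ u g * u g ≤ lam * ∑ g, u g ^ 2 + (∑ g, u g) ^ 2 / (Fintype.card V : ℝ) := by
  refine spectral (avg σ) (avg_symm σ inv hinv hσ) ?_ lam hlam hT u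
  ext g
  simp [avg_apply]

lemma avg_bound₂ [Nonempty I] (σ : I → V → V) (inv : I → I)
    (hinv : ∀ i, inv (inv i) = i) (hσ : ∀ i g, σ (inv i) (σ i g) = g) (lam : ℝ) (hlam : 0 ≤ lam)
    (hT : ∀ (μ : ℝ) (f : V → ℝ), f ≠ 0 → ∑ g, f g = 0 → (∀ g, avg σ f g = μ * f g) → μ ≤ lam)
    (u v : V → ℝ) (hu : ∀ g, 0 ≤ u g) (hv : ∀ g, 0 ≤ v g) :
    2 * ∑ g, avg σ u g * v g ≤ lam * ∑ g, (u g + v g) ^ 2 +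
      (∑ g, (u g + v g)) ^ 2 / (Fintype.card V : ℝ) := by
  have h := avg_bound σ inv hinv hσ lam hlam hT (u + v)
  simp only [map_add, Pi.add_apply, add_mul, mul_add, Finset.sum_add_distrib] at h
  have h1 : ∑ g, avg σ v g * u g = ∑ g, avg σ u g * v g := by
    rw [avg_symm σ inv hinv hσ]; exact Finset.sum_congr rfl fun g _ => by ring
  have hnn : ∀ w : V → ℝ, (∀ g, 0 ≤ w g) → 0 ≤ ∑ g, avg σ w g * w g := fun w hw =>
    Finset.sum_nonneg fun g _ => mul_nonneg
      (div_nonneg (Finset.sum_nonneg fun i _ => hw _) (Nat.cast_nonneg _)) (hw g)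
  have h2 := hnn u hu
  have h3 := hnn v hv
  simp only [Finset.sum_add_distrib]
  linarith

/-- The analytic core: a nonzero locally minimal word violates many constraints. -/
lemma core {I' : Type*} [Fintype I'] [Nonempty V] [Nonempty I] [Nonempty I']
    (σ : I → V → V) (inv : I → I)
    (hinv : ∀ i, inv (inv i) = i) (hσ : ∀ i g, σ (inv i) (σ i g) = g)
    (σ' : I' → V → V) (inv' : I' → I')
    (hinv' : ∀ i, inv' (inv' i) = i) (hσ' : ∀ i g, σ' (inv' i) (σ' i g) = g)
    (ε : ℝ) (hε0 : 0 < ε) (hε1 : ε ≤ 1)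
    (hT : ∀ (μ : ℝ) (f : V → ℝ), f ≠ 0 → ∑ g, f g = 0 → (∀ g, avg σ f g = μ * f g) →
      μ ≤ ε ^ 2 / 2500)
    (hT' : ∀ (μ : ℝ) (f : V → ℝ), f ≠ 0 → ∑ g, f g = 0 → (∀ g, avg σ' f g = μ * f g) →
      μ ≤ ε ^ 2 / 2500)
    (u v : V → ℝ) (hu : ∀ g, 0 ≤ u g) (hv : ∀ g, 0 ≤ v g) (θ : ℝ)
    (hθ : ∀ g, (u g + v g) / 2 ≠ 0 → θ ≤ (u g + v g) / 2)
    (hloc : ∀ g, ε * ((u g + v g) / 2) ≤ 2 * (avg σ' u g + avg σ v g))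
    (hpos : 0 < ∑ g, (u g + v g) / 2) :
    θ * ε * (Fintype.card V : ℝ) ≤ 20 * ∑ g, (u g + v g) / 2 := by
  have hn : (0 : ℝ) < Fintype.card V := by exact_mod_cast Fintype.card_pos
  set w : V → ℝ := fun g => (u g + v g) / 2 with hw
  have hw0 : ∀ g, 0 ≤ w g := fun g => by have := hu g; have := hv g; simp only [hw]; linarith
  have hlam : (0 : ℝ) ≤ ε ^ 2 / 2500 := by positivity
  have b1 := avg_bound₂ σ' inv' hinv' hσ' _ hlam hT' u w hu hw0
  have b2 := avg_bound₂ σ inv hinv hσ _ hlam hT v w hv hw0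
  set Q := ∑ g, w g ^ 2 with hQ
  set P := ∑ g, w g with hP
  have hQ0 : 0 ≤ Q := Finset.sum_nonneg fun g _ => sq_nonneg _
  have s1 : ∑ g, (u g + w g) ^ 2 + ∑ g, (v g + w g) ^ 2 ≤ 10 * Q := by
    rw [← Finset.sum_add_distrib, hQ, Finset.mul_sum]
    refine Finset.sum_le_sum fun g _ => ?_
    simp only [hw]
    nlinarith [hu g, hv g, mul_nonneg (hu g) (hv g)]
  have s2 : (∑ g, (u g + w g)) ^ 2 / (Fintype.card V : ℝ) +
      (∑ g, (v g + w g)) ^ 2 / (Fintype.card V : ℝ) ≤ 10 * P ^ 2 / (Fintype.card V : ℝ) := by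
    rw [← add_div]
    refine div_le_div_of_nonneg_right ?_ hn.le
    simp only [Finset.sum_add_distrib]
    have hU : 0 ≤ ∑ g, u g := Finset.sum_nonneg fun g _ => hu g
    have hV : 0 ≤ ∑ g, v g := Finset.sum_nonneg fun g _ => hv g
    have hPe : ∑ g, w g = (∑ g, u g + ∑ g, v g) / 2 := by
      rw [← Finset.sum_add_distrib, Finset.sum_div]
    rw [hP, hPe]
    nlinarith [mul_nonneg hU hV]
  have s3 : ε * Q ≤ 2 * (∑ g, avg σ' u g * w g) + 2 * ∑ g, avg σ v g * w g := by
    rw [← mul_add, ← Finset.sum_add_distrib, hQ, Finset.mul_sum, Finset.mul_sum]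
    refine Finset.sum_le_sum fun g _ => ?_
    have h := mul_le_mul_of_nonneg_right (hloc g) (hw0 g)
    have e : (u g + v g) / 2 = w g := rfl
    rw [e] at h
    nlinarith [h]
  have s4 : θ * P ≤ Q := by
    rw [hQ, hP, Finset.mul_sum]
    refine Finset.sum_le_sum fun g _ => ?_
    by_cases h : w g = 0
    · simp [h]
    · have := mul_le_mul_of_nonneg_right (hθ g h) (hw0 g)
      simp only [hw] at this ⊢
      nlinarith [this]
  have s5 : ε * Q ≤ ε ^ 2 / 2500 * (10 * Q) + 10 * P ^ 2 / (Fintype.card V : ℝ) := by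
    have := mul_le_mul_of_nonneg_left s1 hlam
    linarith
  have s6 : ε * Q ≤ 20 * P ^ 2 / (Fintype.card V : ℝ) := by
    have h1 : ε ^ 2 / 2500 * (10 * Q) ≤ ε * Q / 2 := by
      have : ε ^ 2 * Q ≤ ε * Q := mul_le_mul_of_nonneg_right (by nlinarith) hQ0
      have : 0 ≤ ε * Q := by positivity
      linarith
    have h2 : 20 * P ^ 2 / (Fintype.card V : ℝ) = 2 * (10 * P ^ 2 / (Fintype.card V : ℝ)) := by ring
    linarith
  rw [le_div_iff₀ hn] at s6
  have s7 : (θ * ε * (Fintype.card V : ℝ)) * P ≤ (20 * P) * P := by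
    have := mul_le_mul_of_nonneg_left s4 (mul_pos hε0 hn).le
    nlinarith
  exact le_of_mul_le_mul_right s7 hpos

end Abs

section Dim

/-- The orbit relation of two commuting involutions. -/
def orbSetoid {X : Type*} (s t : X → X) (hs : ∀ x, s (s x) = x) (ht : ∀ x, t (t x) = x)
    (hst : ∀ x, s (t x) = t (s x)) : Setoid X where
  r x y := y = x ∨ y = s x ∨ y = t x ∨ y = s (t x)
  iseqv :=
    { refl := fun x => Or.inl rfl
      symm := by
        rintro x y (h | h | h | h) <;> subst h <;> simp [hs, ht, hst]
      trans := by
        rintro x y z (h | h | h | h) (k | k | k | k) <;> subst h <;> subst k <;>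
          simp [hs, ht, hst] }

lemma card_orb {X : Type*} [Fintype X] (s t : X → X) (hs : ∀ x, s (s x) = x)
    (ht : ∀ x, t (t x) = x) (hst : ∀ x, s (t x) = t (s x)) :
    Fintype.card X ≤ 4 * Fintype.card (Quotient (orbSetoid s t hs ht hst)) := by
  have := Finset.card_le_mul_card_image_of_maps_to
    (f := fun x : X => (Quotient.mk (orbSetoid s t hs ht hst) x))
    (s := Finset.univ) (t := Finset.univ) (fun _ _ => Finset.mem_univ _) 4 (by
      intro q _
      induction q using Quotient.inductionOn with
      | h x =>
        refine (Finset.card_le_card (t := {x, s x, t x, s (t x)}) ?_).trans Finset.card_le_four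
        intro y hy
        simp only [Finset.mem_filter, Finset.mem_univ, true_and] at hy
        have h : y = x ∨ y = s x ∨ y = t x ∨ y = s (t x) := Quotient.exact hy.symm
        simpa using h)
  simpa using this

lemma finrank_tensor_ge {A B : Type*} [Fintype A] [Fintype B] (CA : Submodule 𝔽 (A → 𝔽))
    (CB : Submodule 𝔽 (B → 𝔽)) :
    Module.finrank 𝔽 CA * Module.finrank 𝔽 CB ≤ Module.finrank 𝔽 (tensorCode CA CB) := by
  let bs := Module.finBasis 𝔽 CA
  let L : (Fin (Module.finrank 𝔽 CA) → CB) →ₗ[𝔽] tensorCode CA CB :=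
    { toFun := fun w => ⟨fun a b => ∑ i, (bs i : A → 𝔽) a * (w i : B → 𝔽) b, by
        constructor
        · intro a
          have : (fun b => ∑ i, (bs i : A → 𝔽) a * (w i : B → 𝔽) b)
              = ∑ i, (bs i : A → 𝔽) a • (w i : B → 𝔽) := by
            ext b; simp
          show (fun b => ∑ i, (bs i : A → 𝔽) a * (w i : B → 𝔽) b) ∈ CB
          rw [this]
          exact Submodule.sum_mem _ fun i _ => CB.smul_mem _ (w i).2
        · intro b
          have : (fun a => ∑ i, (bs i : A → 𝔽) a * (w i : B → 𝔽) b)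
              = ∑ i, (w i : B → 𝔽) b • (bs i : A → 𝔽) := by
            ext a; simp [mul_comm]
          show (fun a => ∑ i, (bs i : A → 𝔽) a * (w i : B → 𝔽) b) ∈ CA
          rw [this]
          exact Submodule.sum_mem _ fun i _ => CA.smul_mem _ (bs i).2⟩
      map_add' := by
        intro x y; ext a b; simp [mul_add, Finset.sum_add_distrib]
      map_smul' := by
        intro c x; ext a b; simp [Finset.mul_sum, mul_left_comm] }
  have hL : Function.Injective L := by
    rw [← LinearMap.ker_eq_bot, LinearMap.ker_eq_bot']
    intro w hw
    ext i b
    have h0 : ∑ i, (w i : B → 𝔽) b • bs i = 0 := by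
      ext a
      have := congrFun (congrFun (congrArg Subtype.val hw) a) b
      simp only [L, LinearMap.coe_mk, AddHom.coe_mk, ZeroMemClass.coe_zero, Pi.zero_apply] at this
      simp only [Submodule.coe_sum, Submodule.coe_smul, Finset.sum_apply, Pi.smul_apply,
        smul_eq_mul, ZeroMemClass.coe_zero, Pi.zero_apply]
      rw [← this]
      exact Finset.sum_congr rfl fun i _ => mul_comm _ _
    exact Fintype.linearIndependent_iff.1 bs.linearIndependent _ h0 i
  have := LinearMap.finrank_le_finrank_of_injective hL
  rwa [Module.finrank_pi_fintype, Finset.sum_const, Finset.card_univ, Fintype.card_fin,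
    smul_eq_mul] at this

lemma rate (A B : Finset G) (CA : Submodule 𝔽 (↥A → 𝔽)) (CB : Submodule 𝔽 (↥B → 𝔽))
    (hA : ∀ a ∈ A, a⁻¹ ∈ A) (hB : ∀ b ∈ B, b⁻¹ ∈ B) :
    (Fintype.card G : ℝ) *
        ((Module.finrank 𝔽 ↥CA : ℝ) * (Module.finrank 𝔽 ↥CB : ℝ) -
          3 / 4 * (A.card : ℝ) * (B.card : ℝ)) ≤
      (Module.finrank 𝔽 ↥(Z0 A B CA CB hA hB) : ℝ) := by
  let T : Submodule 𝔽 (G → ↥A → ↥B → 𝔽) := Submodule.pi Set.univ fun _ => tensorCode CA CB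
  let W : Submodule 𝔽 (G → ↥A → ↥B → 𝔽) := Z0 A B ⊤ ⊤ hA hB
  have hZ : Z0 A B CA CB hA hB = T ⊓ W := by
    ext m
    simp only [Submodule.mem_inf, T, W, Submodule.mem_pi, Set.mem_univ, true_implies]
    constructor
    · intro h
      exact ⟨h.1, ⟨fun g => ⟨fun _ => trivial, fun _ => trivial⟩, h.2⟩⟩
    · intro h
      exact ⟨h.1, h.2.2⟩
  have hT : Fintype.card G * Module.finrank 𝔽 (tensorCode CA CB) ≤ Module.finrank 𝔽 T := by
    let L : (G → tensorCode CA CB) →ₗ[𝔽] T :=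
      { toFun := fun w => ⟨fun g => (w g : ↥A → ↥B → 𝔽), fun g _ => (w g).2⟩
        map_add' := fun x y => rfl
        map_smul' := fun c x => rfl }
    have hL : Function.Injective L := by
      intro x y h
      ext g a b
      exact congrFun (congrFun (congrFun (congrArg Subtype.val h) g) a) b
    have := LinearMap.finrank_le_finrank_of_injective hL
    rwa [Module.finrank_pi_fintype, Finset.sum_const, Finset.card_univ, smul_eq_mul] at this
  have hW : Fintype.card G * (A.card * B.card) ≤ 4 * Module.finrank 𝔽 W := by
    let s : G × ↥A × ↥B → G × ↥A × ↥B :=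
      fun x => ((x.2.1 : G) * x.1, ⟨(x.2.1 : G)⁻¹, hA _ x.2.1.2⟩, x.2.2)
    let t : G × ↥A × ↥B → G × ↥A × ↥B :=
      fun x => (x.1 * (x.2.2 : G), x.2.1, ⟨(x.2.2 : G)⁻¹, hB _ x.2.2.2⟩)
    have hs : ∀ x, s (s x) = x := by rintro ⟨g, a, b⟩; simp [s]
    have ht : ∀ x, t (t x) = x := by rintro ⟨g, a, b⟩; simp [t]
    have hst : ∀ x, s (t x) = t (s x) := by rintro ⟨g, a, b⟩; simp [s, t, mul_assoc]
    have hc := card_orb s t hs ht hst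
    let L : (Quotient (orbSetoid s t hs ht hst) → 𝔽) →ₗ[𝔽] W :=
      { toFun := fun ψ => ⟨fun g a b => ψ (Quotient.mk _ (g, a, b)),
          fun g => ⟨fun _ => trivial, fun _ => trivial⟩, fun g a b =>
          ⟨congrArg ψ (Quotient.sound (Or.inr (Or.inl rfl))),
           congrArg ψ (Quotient.sound (Or.inr (Or.inr (Or.inl rfl))))⟩⟩
        map_add' := fun x y => rfl
        map_smul' := fun c x => rfl }
    have hL : Function.Injective L := by
      intro x y h
      ext q
      induction q using Quotient.inductionOn with
      | h x =>
        obtain ⟨g, a, b⟩ := x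
        exact congrFun (congrFun (congrFun (congrArg Subtype.val h) g) a) b
    have := LinearMap.finrank_le_finrank_of_injective hL
    rw [Module.finrank_fintype_fun_eq_card] at this
    simp only [Fintype.card_prod, Fintype.card_coe] at hc
    omega
  have hsum := Submodule.finrank_sup_add_finrank_inf_eq T W
  have hle : Module.finrank 𝔽 ↥(T ⊔ W) ≤ Fintype.card G * (A.card * B.card) := by
    refine (Submodule.finrank_le _).trans ?_
    simp [Module.finrank_pi_fintype]
  have hten := Nat.mul_le_mul_left (Fintype.card G) (finrank_tensor_ge CA CB)
  rw [hZ]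
  have c1 : (Fintype.card G : ℝ) * ((Module.finrank 𝔽 ↥CA : ℝ) * (Module.finrank 𝔽 ↥CB : ℝ)) ≤
      (Module.finrank 𝔽 T : ℝ) := by exact_mod_cast hten.trans hT
  have c2 : (Fintype.card G : ℝ) * ((A.card : ℝ) * (B.card : ℝ)) ≤ 4 * (Module.finrank 𝔽 W : ℝ) := by
    exact_mod_cast hW
  have c3 : (Module.finrank 𝔽 ↥(T ⊔ W) : ℝ) ≤
      (Fintype.card G : ℝ) * ((A.card : ℝ) * (B.card : ℝ)) := by exact_mod_cast hle
  have c4 : (Module.finrank 𝔽 ↥(T ⊔ W) : ℝ) + (Module.finrank 𝔽 ↥(T ⊓ W) : ℝ) =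
    (Module.finrank 𝔽 T : ℝ) + (Module.finrank 𝔽 W : ℝ) := by exact_mod_cast hsum
  linarith

end Dim

section Sound

/-- Inverse on a symmetric set. -/
def sinv (A : Finset G) (hA : ∀ a ∈ A, a⁻¹ ∈ A) (a : ↥A) : ↥A := ⟨(a : G)⁻¹, hA _ a.2⟩

/-- Left translation. -/
def lt (A : Finset G) (a : ↥A) (g : G) : G := (a : G) * g

/-- Right translation. -/
def rt (B : Finset G) (b : ↥B) (g : G) : G := g * (b : G)

/-- Row of a matrix. -/
def row {I J : Type*} (a : I) (m : I → J → 𝔽) : J → 𝔽 := m a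

/-- Column of a matrix. -/
def col {I J : Type*} (b : J) (m : I → J → 𝔽) : I → 𝔽 := fun a => m a b

lemma sinv_sinv (A : Finset G) (hA : ∀ a ∈ A, a⁻¹ ∈ A) (a : ↥A) :
    sinv A hA (sinv A hA a) = a := by simp [sinv]

lemma lt_inv (A : Finset G) (hA : ∀ a ∈ A, a⁻¹ ∈ A) (a : ↥A) (g : G) :
    lt A (sinv A hA a) (lt A a g) = g := by simp [lt, sinv]

lemma rt_inv (A : Finset G) (hA : ∀ a ∈ A, a⁻¹ ∈ A) (a : ↥A) (g : G) :
    rt A (sinv A hA a) (rt A a g) = g := by simp [rt, sinv]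

lemma left_exp (A : Finset G) (lam : ℝ) (h : IsLeftCayleyExpander A lam) (μ : ℝ) (f : G → ℝ)
    (hf : f ≠ 0) (hs : ∑ g, f g = 0) (he : ∀ g, avg (lt A) f g = μ * f g) : μ ≤ lam := by
  refine h μ f hf hs fun g => ?_
  rw [← he g, avg_apply, Fintype.card_coe]
  congr 1
  exact (Finset.sum_coe_sort A (fun a => f (a * g))).symm

lemma right_exp (A : Finset G) (lam : ℝ) (h : IsRightCayleyExpander A lam) (μ : ℝ) (f : G → ℝ)
    (hf : f ≠ 0) (hs : ∑ g, f g = 0) (he : ∀ g, avg (rt A) f g = μ * f g) : μ ≤ lam := by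
  refine h μ f hf hs fun g => ?_
  rw [← he g, avg_apply, Fintype.card_coe]
  congr 1
  exact (Finset.sum_coe_sort A (fun a => f (g * a))).symm

lemma distance (A B : Finset G) (CA : Submodule 𝔽 (↥A → 𝔽)) (CB : Submodule 𝔽 (↥B → 𝔽))
    (hA : ∀ a ∈ A, a⁻¹ ∈ A) (hB : ∀ b ∈ B, b⁻¹ ∈ B) (ε : ℝ) (hε0 : 0 < ε) (hε1 : ε ≤ 1)
    (h1a : ∀ c ∈ CA, c ≠ 0 →
      ε ≤ ((Finset.univ.filter fun a : ↥A => c a ≠ 0).card : ℝ) / (A.card : ℝ))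
    (h2a : IsLeftCayleyExpander A (ε ^ 2 / 2500))
    (m : G → ↥A → ↥B → 𝔽) (hm : m ∈ Z0 A B CA CB hA hB) (hm0 : m ≠ 0) :
    0.9996 * ε ≤ ((Finset.univ.filter fun g : G => m g ≠ 0).card : ℝ) / (Fintype.card G : ℝ) := by
  obtain ⟨g₀, hg₀⟩ : ∃ g, m g ≠ 0 := by
    by_contra! h; exact hm0 (funext h)
  obtain ⟨a₀, ha₀⟩ : ∃ a, m g₀ a ≠ 0 := by
    by_contra! h; exact hg₀ (funext h)
  have : Nonempty ↥A := ⟨a₀⟩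
  have hα : (0 : ℝ) < A.card := by
    exact_mod_cast Finset.card_pos.2 ⟨(a₀ : G), a₀.2⟩
  have hn : (0 : ℝ) < Fintype.card G := by exact_mod_cast Fintype.card_pos
  let u : G → ℝ := fun g => if m g ≠ 0 then 1 else 0
  have hsum : ∑ g, u g = ((Finset.univ.filter fun g : G => m g ≠ 0).card : ℝ) := by
    simp [u, Finset.sum_ite]
  have hsq : ∑ g, u g ^ 2 = ∑ g, u g := by
    refine Finset.sum_congr rfl fun g _ => ?_
    simp only [u]; split_ifs <;> norm_num
  have hb := avg_bound (lt A) (sinv A hA) (sinv_sinv A hA) (lt_inv A hA) (ε ^ 2 / 2500)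
    (by positivity) (left_exp A _ h2a) u
  have hlow : ε * ∑ g, u g ≤ ∑ g, avg (lt A) u g * u g := by
    rw [Finset.mul_sum]
    refine Finset.sum_le_sum fun g _ => ?_
    by_cases hg : m g = 0
    · simp [u, hg]
    have hug : u g = 1 := by simp [u, hg]
    rw [hug, mul_one, mul_one]
    obtain ⟨b, hb⟩ : ∃ b, (fun a => m g a b) ≠ 0 := by
      by_contra! h
      exact hg (funext fun a => funext fun b => congrFun (h b) a)
    refine (h1a _ ((hm.1 g).2 b) hb).trans ?_
    rw [avg_apply, Fintype.card_coe]
    refine div_le_div_of_nonneg_right ?_ hα.le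
    rw [Finset.card_filter]
    push_cast
    refine Finset.sum_le_sum fun a _ => ?_
    by_cases h : m g a b = 0
    · simp only [h, ne_eq, not_true, if_false, u]; split_ifs <;> norm_num
    · have : m (lt A a g) ≠ 0 := by
        intro h0
        apply h
        rw [(hm.2 g a b).1]
        exact congrFun (congrFun h0 _) b
      simp [u, h, this]
  rw [hsq] at hb
  rw [← hsum]
  have hP : 0 < ∑ g, u g := by
    rw [hsum]
    exact_mod_cast Finset.card_pos.2 ⟨g₀, by simp [hg₀]⟩
  set P := ∑ g, u g
  have h1 : ε * P ≤ (ε ^ 2 / 2500 + P / (Fintype.card G : ℝ)) * P := by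
    have : (ε ^ 2 / 2500 + P / (Fintype.card G : ℝ)) * P =
      ε ^ 2 / 2500 * P + P ^ 2 / (Fintype.card G : ℝ) := by ring
    linarith
  have h2 := le_of_mul_le_mul_right h1 hP
  nlinarith

/-- Number of violated row constraints at a vertex. -/
def XA (A B : Finset G) (hA : ∀ a ∈ A, a⁻¹ ∈ A) (f : G → ↥A → ↥B → 𝔽) (g : G) : ℝ :=
  ∑ a, bad row (lt A) (sinv A hA) f g a

/-- Number of violated column constraints at a vertex. -/
def XB (A B : Finset G) (hB : ∀ b ∈ B, b⁻¹ ∈ B) (f : G → ↥A → ↥B → 𝔽) (g : G) : ℝ :=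
  ∑ b, bad col (rt B) (sinv B hB) f g b

lemma XA_eq (A B : Finset G) (hA : ∀ a ∈ A, a⁻¹ ∈ A) (f : G → ↥A → ↥B → 𝔽) (g : G) :
    XA A B hA f g = ((Finset.univ.filter fun a : ↥A =>
      f g a ≠ f ((a : G) * g) ⟨(a : G)⁻¹, hA _ a.2⟩).card : ℝ) := by
  rw [Finset.card_filter]
  push_cast
  refine Finset.sum_congr rfl fun i _ => ?_
  by_cases h : row i (f g) = row (sinv A hA i) (f (lt A i g))
  · exact (if_neg (not_not.2 h)).trans (if_neg (not_not.2 h)).symm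
  · exact (if_pos h).trans (if_pos h).symm

lemma XB_eq (A B : Finset G) (hB : ∀ b ∈ B, b⁻¹ ∈ B) (f : G → ↥A → ↥B → 𝔽) (g : G) :
    XB A B hB f g = ((Finset.univ.filter fun b : ↥B =>
      (fun a => f g a b) ≠ fun a => f (g * (b : G)) a ⟨(b : G)⁻¹, hB _ b.2⟩).card : ℝ) := by
  rw [Finset.card_filter]
  push_cast
  refine Finset.sum_congr rfl fun i _ => ?_
  by_cases h : col i (f g) = col (sinv B hB i) (f (rt B i g))
  · exact (if_neg (not_not.2 h)).trans (if_neg (not_not.2 h)).symm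
  · exact (if_pos h).trans (if_pos h).symm

lemma edge_count (A B : Finset G) (hA1 : (1 : G) ∉ A) (hB1 : (1 : G) ∉ B)
    (hA : ∀ a ∈ A, a⁻¹ ∈ A) (hB : ∀ b ∈ B, b⁻¹ ∈ B)
    (htnc : ∀ (g : G), ∀ a ∈ A, ∀ b ∈ B, g * a * g⁻¹ ≠ b) (f : G → ↥A → ↥B → 𝔽) :
    ∑ g, (XA A B hA f g + XB A B hB f g) ≤ 2 * ((violatedEdges A B hA hB f).card : ℝ) := by
  have hpair : ∀ (g x y : G), x ≠ g → y ≠ g → ({g, x} : Finset G) = {g, y} → x = y := by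
    intro g x y hx hy h
    have : x ∈ ({g, y} : Finset G) := by rw [← h]; simp
    simp only [Finset.mem_insert, Finset.mem_singleton] at this
    exact this.resolve_left hx
  have hAne : ∀ (a : ↥A) (g : G), (a : G) * g ≠ g := by
    intro a g h
    have : (a : G) = 1 := by simpa using h
    exact hA1 (this ▸ a.2)
  have hBne : ∀ (b : ↥B) (g : G), g * (b : G) ≠ g := by
    intro b g h
    have : (b : G) = 1 := by simpa using h
    exact hB1 (this ▸ b.2)
  set E := violatedEdges A B hA hB f with hE
  have hloc : ∀ g, XA A B hA f g + XB A B hB f g ≤ ((E.filter fun e => g ∈ e).card : ℝ) := by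
    intro g
    rw [XA_eq, XB_eq]
    set SA := Finset.univ.filter fun a : ↥A => f g a ≠ f ((a : G) * g) ⟨(a : G)⁻¹, hA _ a.2⟩
      with hSA
    set SB := Finset.univ.filter fun b : ↥B =>
      (fun a => f g a b) ≠ fun a => f (g * (b : G)) a ⟨(b : G)⁻¹, hB _ b.2⟩ with hSB
    have i1 : (SA.image fun a : ↥A => ({g, (a : G) * g} : Finset G)).card = SA.card := by
      refine Finset.card_image_of_injective _ fun a a' h => ?_
      have := hpair _ _ _ (hAne a g) (hAne a' g) h
      exact Subtype.ext (mul_right_cancel this)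
    have i2 : (SB.image fun b : ↥B => ({g, g * (b : G)} : Finset G)).card = SB.card := by
      refine Finset.card_image_of_injective _ fun a a' h => ?_
      have := hpair _ _ _ (hBne a g) (hBne a' g) h
      exact Subtype.ext (mul_left_cancel this)
    have hd : Disjoint (SA.image fun a : ↥A => ({g, (a : G) * g} : Finset G))
        (SB.image fun b : ↥B => ({g, g * (b : G)} : Finset G)) := by
      rw [Finset.disjoint_left]
      intro e he he'
      obtain ⟨a, -, rfl⟩ := Finset.mem_image.1 he
      obtain ⟨b, -, hb⟩ := Finset.mem_image.1 he'
      have := hpair _ _ _ (hBne b g) (hAne a g) hb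
      apply htnc g⁻¹ a a.2 b b.2
      rw [inv_inv, mul_assoc, ← this]; simp
    have hsub : (SA.image fun a : ↥A => ({g, (a : G) * g} : Finset G)) ∪
        (SB.image fun b : ↥B => ({g, g * (b : G)} : Finset G)) ⊆ E.filter fun e => g ∈ e := by
      intro e he
      rcases Finset.mem_union.1 he with he | he
      · obtain ⟨a, ha, rfl⟩ := Finset.mem_image.1 he
        refine Finset.mem_filter.2 ⟨?_, by simp⟩
        exact Finset.mem_filter.2 ⟨Finset.mem_univ _, Or.inl ⟨g, a, rfl, (Finset.mem_filter.1 ha).2⟩⟩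
      · obtain ⟨a, ha, rfl⟩ := Finset.mem_image.1 he
        refine Finset.mem_filter.2 ⟨?_, by simp⟩
        exact Finset.mem_filter.2 ⟨Finset.mem_univ _, Or.inr ⟨g, a, rfl, (Finset.mem_filter.1 ha).2⟩⟩
    have := Finset.card_le_card hsub
    rw [Finset.card_union_of_disjoint hd, i1, i2] at this
    exact_mod_cast this
  refine (Finset.sum_le_sum fun g _ => hloc g).trans ?_
  have h1 : ∑ g, (E.filter fun e => g ∈ e).card = ∑ e ∈ E, e.card := by
    have := Finset.sum_card_bipartiteAbove_eq_sum_card_bipartiteBelow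
      (s := (Finset.univ : Finset G)) (t := E) (fun g e => g ∈ e)
    simpa [Finset.bipartiteAbove, Finset.bipartiteBelow] using this
  have h2 : ∑ e ∈ E, e.card ≤ ∑ e ∈ E, 2 := by
    refine Finset.sum_le_sum fun e he => ?_
    rcases (Finset.mem_filter.1 he).2 with ⟨g, a, rfl, -⟩ | ⟨g, a, rfl, -⟩ <;>
      exact Finset.card_le_two
  rw [Finset.sum_const, smul_eq_mul, mul_comm, ← h1] at h2
  exact_mod_cast h2

/-- Local consequence of agreement testability. -/
lemma agree (A B : Finset G) (CA : Submodule 𝔽 (↥A → 𝔽)) (CB : Submodule 𝔽 (↥B → 𝔽))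
    (hA : ∀ a ∈ A, a⁻¹ ∈ A) (hB : ∀ b ∈ B, b⁻¹ ∈ B) (ε : ℝ)
    (hα : (0 : ℝ) < A.card) (hβ : (0 : ℝ) < B.card)
    (h1c : AgreementTestable CA CB ε)
    (f : G → ↥A → ↥B → 𝔽) (hf : ∀ g, f g ∈ tensorCode CA CB) (g : G) :
    ∃ m ∈ tensorCode CA CB,
      ε * (((∑ a, badAt row (lt A) (sinv A hA) f g m a) / A.card +
        (∑ b, badAt col (rt B) (sinv B hB) f g m b) / B.card) / 2)
      ≤ avg (rt B) (fun h => XA A B hA f h / A.card) g +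
        avg (lt A) (fun h => XB A B hB f h / B.card) g := by
  obtain ⟨m, hm, h⟩ := h1c (fun a b => f (rt B b g) a (sinv B hB b))
    (fun a b => f (lt A a g) (sinv A hA a) b) (fun b => (hf _).2 _) (fun a => (hf _).1 _)
  refine ⟨m, hm, ?_⟩
  have e1 : ∑ a, badAt row (lt A) (sinv A hA) f g m a =
      ((Finset.univ.filter fun a : ↥A =>
        (fun b => f (lt A a g) (sinv A hA a) b) ≠ m a).card : ℝ) := by
    rw [Finset.card_filter]; push_cast
    refine Finset.sum_congr rfl fun a _ => ?_
    by_cases h' : row a m = row (sinv A hA a) (f (lt A a g))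
    · exact (if_neg (not_not.2 h')).trans (if_neg (not_not.2 h'.symm)).symm
    · exact (if_pos h').trans (if_pos (Ne.symm h')).symm
  have e2 : ∑ b, badAt col (rt B) (sinv B hB) f g m b =
      ((Finset.univ.filter fun b : ↥B =>
        (fun a => f (rt B b g) a (sinv B hB b)) ≠ fun a => m a b).card : ℝ) := by
    rw [Finset.card_filter]; push_cast
    refine Finset.sum_congr rfl fun a _ => ?_
    by_cases h' : col a m = col (sinv B hB a) (f (rt B a g))
    · exact (if_neg (not_not.2 h')).trans (if_neg (not_not.2 h'.symm)).symm
    · exact (if_pos h').trans (if_pos (Ne.symm h')).symm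
  have e3 : ((Finset.univ.filter fun p : ↥A × ↥B =>
      f (rt B p.2 g) p.1 (sinv B hB p.2) ≠ f (lt A p.1 g) (sinv A hA p.1) p.2).card : ℝ) ≤
      ∑ b, XA A B hA f (rt B b g) + ∑ a, XB A B hB f (lt A a g) := by
    rw [Finset.card_filter]; push_cast
    simp only [XA, XB]
    rw [Finset.sum_comm (γ := ↥B), ← Finset.sum_add_distrib, Fintype.sum_prod_type]
    refine Finset.sum_le_sum fun a _ => ?_
    rw [← Finset.sum_add_distrib]
    refine Finset.sum_le_sum fun b _ => ?_
    have n1 := bad_nonneg row (lt A) (sinv A hA) f (rt B b g) a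
    have n2 := bad_nonneg col (rt B) (sinv B hB) f (lt A a g) b
    split_ifs with hne
    · by_cases c1 : row a (f (rt B b g)) = row (sinv A hA a) (f (lt A a (rt B b g)))
      · by_cases c2 : col b (f (lt A a g)) = col (sinv B hB b) (f (rt B b (lt A a g)))
        · exfalso
          apply hne
          have d1 := congrFun c1 (sinv B hB b)
          have d2 := congrFun c2 (sinv A hA a)
          have d3 : lt A a (rt B b g) = rt B b (lt A a g) := by simp [lt, rt, mul_assoc]
          simp only [row, col] at d1 d2
          rw [d1, d2, d3]
        · have : bad col (rt B) (sinv B hB) f (lt A a g) b = 1 := by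
            unfold bad; rw [if_pos c2]
          linarith
      · have : bad row (lt A) (sinv A hA) f (rt B b g) a = 1 := by
          unfold bad; rw [if_pos c1]
        linarith
    · linarith
  simp only [Fintype.card_coe] at h
  rw [e1, e2]
  have e4 : avg (rt B) (fun h => XA A B hA f h / A.card) g +
        avg (lt A) (fun h => XB A B hB f h / B.card) g =
      (∑ b, XA A B hA f (rt B b g) + ∑ a, XB A B hB f (lt A a g)) /
        ((A.card : ℝ) * (B.card : ℝ)) := by
    simp only [avg_apply, Fintype.card_coe, ← Finset.sum_div]
    field_simp
  rw [e4]
  have e5 := div_le_div_of_nonneg_right e3 (mul_pos hα hβ).le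
  refine le_trans (le_of_eq ?_) (h.trans e5)
  congr 1
  field_simp
  try ring

lemma soundness [Fintype 𝔽] (A B : Finset G) (CA : Submodule 𝔽 (↥A → 𝔽))
    (CB : Submodule 𝔽 (↥B → 𝔽)) (hA1 : (1 : G) ∉ A) (hB1 : (1 : G) ∉ B)
    (hA : ∀ a ∈ A, a⁻¹ ∈ A) (hB : ∀ b ∈ B, b⁻¹ ∈ B)
    (htnc : ∀ (g : G), ∀ a ∈ A, ∀ b ∈ B, g * a * g⁻¹ ≠ b)
    (ε : ℝ) (hε0 : 0 < ε) (hε1 : ε ≤ 1) (hAn : A.Nonempty) (hBn : B.Nonempty)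
    (h1c : AgreementTestable CA CB ε)
    (h2a : IsLeftCayleyExpander A (ε ^ 2 / 2500))
    (h2b : IsRightCayleyExpander B (ε ^ 2 / 2500))
    (f : G → ↥A → ↥B → 𝔽) (hf : ∀ g : G, f g ∈ tensorCode CA CB) :
    ∃ m ∈ Z0 A B CA CB hA hB,
      ((Finset.univ.filter fun g : G => f g ≠ m g).card : ℝ) / (Fintype.card G : ℝ) ≤
        40 * max (A.card : ℝ) (B.card : ℝ) *
          ((violatedEdges A B hA hB f).card : ℝ) /
            (ε * (Fintype.card G : ℝ) * min (A.card : ℝ) (B.card : ℝ)) := by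
  have : Nonempty ↥A := hAn.to_subtype
  have : Nonempty ↥B := hBn.to_subtype
  have hα : (0 : ℝ) < A.card := by exact_mod_cast hAn.card_pos
  have hβ : (0 : ℝ) < B.card := by exact_mod_cast hBn.card_pos
  have hn : (0 : ℝ) < Fintype.card G := by exact_mod_cast Fintype.card_pos
  set α : ℝ := (A.card : ℝ) with hαdef
  set β : ℝ := (B.card : ℝ) with hβdef
  set mx := max α β with hmx
  set mn := min α β with hmn
  have hmx0 : 0 < mx := lt_max_of_lt_left hα
  have hmn0 : 0 < mn := lt_min hα hβ
  have hltne : ∀ (a : ↥A) (g : G), lt A a g ≠ g := by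
    intro a g h
    have : (a : G) = 1 := by simpa [lt] using h
    exact hA1 (this ▸ a.2)
  have hrtne : ∀ (b : ↥B) (g : G), rt B b g ≠ g := by
    intro b g h
    have : (b : G) = 1 := by simpa [rt] using h
    exact hB1 (this ▸ b.2)
  let w : (G → ↥A → ↥B → 𝔽) → G → ℝ := fun F g =>
    (XA A B hA F g / α + XB A B hB F g / β) / 2
  let Wt : (G → ↥A → ↥B → 𝔽) → ℝ := fun F => ∑ g, w F g
  have hXA0 : ∀ (F : G → ↥A → ↥B → 𝔽) g, 0 ≤ XA A B hA F g := fun F g =>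
    Finset.sum_nonneg fun a _ => bad_nonneg _ _ _ _ _ _
  have hXB0 : ∀ (F : G → ↥A → ↥B → 𝔽) g, 0 ≤ XB A B hB F g := fun F g =>
    Finset.sum_nonneg fun a _ => bad_nonneg _ _ _ _ _ _
  have hw0 : ∀ F g, 0 ≤ w F g := fun F g => by
    have := hXA0 F g; have := hXB0 F g; positivity
  have hWt0 : ∀ F, 0 ≤ Wt F := fun F => Finset.sum_nonneg fun g _ => hw0 F g
  -- upper bound for the initial weight
  have hWV : Wt f ≤ ((violatedEdges A B hA hB f).card : ℝ) / mn := by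
    have h := edge_count A B hA1 hB1 hA hB htnc f
    have h1 : Wt f ≤ (∑ g, (XA A B hA f g + XB A B hB f g)) / (2 * mn) := by
      rw [Finset.sum_div]
      refine Finset.sum_le_sum fun g _ => ?_
      have q1 : XA A B hA f g / α ≤ XA A B hA f g / mn :=
        div_le_div_of_nonneg_left (hXA0 f g) hmn0 (min_le_left _ _)
      have q2 : XB A B hB f g / β ≤ XB A B hB f g / mn :=
        div_le_div_of_nonneg_left (hXB0 f g) hmn0 (min_le_right _ _)
      have q3 : (XA A B hA f g + XB A B hB f g) / (2 * mn) =
        (XA A B hA f g / mn + XB A B hB f g / mn) / 2 := by field_simp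
      rw [q3]
      simp only [w]
      linarith
    refine h1.trans ?_
    rw [div_le_div_iff₀ (by positivity) hmn0]
    nlinarith [mul_le_mul_of_nonneg_right h hmn0.le]
  -- lower bound for nonzero local weight
  have hθ : ∀ F g, w F g ≠ 0 → 1 / (2 * mx) ≤ w F g := by
    intro F g h
    have hcase : 1 ≤ XA A B hA F g ∨ 1 ≤ XB A B hB F g := by
      by_contra! hc
      apply h
      have z1 : XA A B hA F g = 0 := by
        have := hc.1
        rw [XA_eq] at this ⊢
        rw [Nat.cast_lt_one] at this
        rw [this, Nat.cast_zero]
      have z2 : XB A B hB F g = 0 := by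
        have := hc.2
        rw [XB_eq] at this ⊢
        rw [Nat.cast_lt_one] at this
        rw [this, Nat.cast_zero]
      simp [w, z1, z2]
    have q0 : 1 / (2 * mx) = (1 / mx) / 2 := by field_simp
    rw [q0]
    have p1 : 0 ≤ XA A B hA F g / α := div_nonneg (hXA0 F g) hα.le
    have p2 : 0 ≤ XB A B hB F g / β := div_nonneg (hXB0 F g) hβ.le
    simp only [w]
    rcases hcase with hc | hc
    · have : 1 / mx ≤ XA A B hA F g / α :=
        div_le_div₀ (hXA0 F g) hc hα (le_max_left _ _)
      linarith
    · have : 1 / mx ≤ XB A B hB F g / β :=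
        div_le_div₀ (hXB0 F g) hc hβ (le_max_right _ _)
      linarith
  -- a minimizer of the penalized weight
  let N : (G → ↥A → ↥B → 𝔽) → ℝ := fun F =>
    ((Finset.univ.filter fun g : G => f g ≠ F g).card : ℝ)
  obtain ⟨F, hF, hmin⟩ := Set.exists_min_image
    {F : G → ↥A → ↥B → 𝔽 | ∀ g, F g ∈ tensorCode CA CB}
    (fun F => Wt F + 1 / (2 * mx) * N F) (Set.toFinite _) ⟨f, hf⟩
  simp only [Set.mem_ofPred_eq] at hF hmin
  have hNf : N f = 0 := by simp [N]
  have hΦ : Wt F + 1 / (2 * mx) * N F ≤ Wt f := by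
    have := hmin f hf
    rw [hNf] at this; linarith
  have hcpos : 0 < 1 / (2 * mx) := by positivity
  have hN0 : 0 ≤ N F := Nat.cast_nonneg _
  have hfinal : ∀ d : ℝ, d ≤ 40 * mx * Wt f / (ε * (Fintype.card G : ℝ)) →
      d ≤ 40 * mx * ((violatedEdges A B hA hB f).card : ℝ) / (ε * (Fintype.card G : ℝ) * mn) := by
    intro d hd
    refine hd.trans ?_
    have e : 40 * mx * ((violatedEdges A B hA hB f).card : ℝ) / (ε * (Fintype.card G : ℝ) * mn) =
      40 * mx * (((violatedEdges A B hA hB f).card : ℝ) / mn) / (ε * (Fintype.card G : ℝ)) := by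
      field_simp
    rw [e]
    gcongr
  -- local minimality
  have hlocmin : ∀ g, ∀ m ∈ tensorCode CA CB,
      w F g ≤ ((∑ a, badAt row (lt A) (sinv A hA) F g m a) / α +
        (∑ b, badAt col (rt B) (sinv B hB) F g m b) / β) / 2
        + 1 / (2 * mx) / 2 := by
    intro g m hm
    set F' := Function.update F g m with hF'
    have hF'm : ∀ h, F' h ∈ tensorCode CA CB := by
      intro h
      by_cases hh : h = g
      · subst hh; simpa [hF'] using hm
      · rw [hF', Function.update_of_ne hh]; exact hF h
    have h1 := hmin F' hF'm
    have h2 : N F' ≤ N F + 1 := by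
      have hsub : (Finset.univ.filter fun h : G => f h ≠ F' h) ⊆
          insert g (Finset.univ.filter fun h : G => f h ≠ F h) := by
        intro h hh
        by_cases e : h = g
        · simp [e]
        · simp only [Finset.mem_filter, Finset.mem_univ, true_and, hF',
            Function.update_of_ne e] at hh
          simp [hh]
      have := (Finset.card_le_card hsub).trans (Finset.card_insert_le _ _)
      simp only [N]
      exact_mod_cast this
    have uA := sum_bad_update row (lt A) (sinv A hA) (sinv_sinv A hA) (lt_inv A hA) hltne F g m
    have uB := sum_bad_update col (rt B) (sinv B hB) (sinv_sinv B hB) (rt_inv B hB) hrtne F g m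
    have hsplit : ∀ H : G → ↥A → ↥B → 𝔽, Wt H =
        ((∑ h, XA A B hA H h) / α + (∑ h, XB A B hB H h) / β) / 2 := by
      intro H
      simp only [Wt, w, ← Finset.sum_div, Finset.sum_add_distrib]
    have hW' : Wt F' = Wt F +
        2 * (((∑ a, badAt row (lt A) (sinv A hA) F g m a) / α +
        (∑ b, badAt col (rt B) (sinv B hB) F g m b) / β) / 2
        - w F g) := by
      rw [hsplit, hsplit]
      simp only [w, XA, XB]
      rw [hF', uA, uB]
      ring
    have h3 : 1 / (2 * mx) * N F' ≤ 1 / (2 * mx) * N F + 1 / (2 * mx) := by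
      have := mul_le_mul_of_nonneg_left h2 hcpos.le
      linarith
    rw [hW'] at h1
    linarith
  rcases (hWt0 F).eq_or_lt with hz | hpos
  · -- the corrected word is a codeword
    have hwz : ∀ g, w F g = 0 := fun g =>
      (Finset.sum_eq_zero_iff_of_nonneg (fun g _ => hw0 F g)).1 hz.symm g (Finset.mem_univ g)
    have hXz : ∀ g, XA A B hA F g = 0 ∧ XB A B hB F g = 0 := by
      intro g
      have h := hwz g
      have p1 : 0 ≤ XA A B hA F g / α := div_nonneg (hXA0 F g) hα.le
      have p2 : 0 ≤ XB A B hB F g / β := div_nonneg (hXB0 F g) hβ.le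
      simp only [w] at h
      have r1 : XA A B hA F g / α = 0 := by linarith
      have r2 : XB A B hB F g / β = 0 := by linarith
      exact ⟨(div_eq_zero_iff.1 r1).resolve_right hα.ne', (div_eq_zero_iff.1 r2).resolve_right hβ.ne'⟩
    refine ⟨F, ⟨hF, ?_⟩, ?_⟩
    · intro g a b
      have h1 := (hXz g).1
      have h2 := (hXz g).2
      rw [XA_eq] at h1
      rw [XB_eq] at h2
      have h1' := Finset.card_eq_zero.1 (Nat.cast_eq_zero.1 h1)
      have h2' := Finset.card_eq_zero.1 (Nat.cast_eq_zero.1 h2)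
      rw [Finset.filter_eq_empty_iff] at h1' h2'
      have k1 := not_not.1 (h1' (Finset.mem_univ a))
      have k2 := not_not.1 (h2' (Finset.mem_univ b))
      exact ⟨congrFun k1 b, congrFun k2 a⟩
    · apply hfinal
      change N F / _ ≤ _
      have h1 : N F ≤ 2 * mx * Wt f := by
        have : 1 / (2 * mx) * N F ≤ Wt f := by linarith [hWt0 F]
        rw [one_div, inv_mul_le_iff₀ (mul_pos two_pos hmx0)] at this
        exact this
      rw [div_le_div_iff₀ hn (mul_pos hε0 hn)]
      have h2 : N F * ε ≤ N F := by nlinarith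
      have h3 : 0 ≤ mx * Wt f := mul_nonneg hmx0.le (hWt0 f)
      nlinarith [mul_le_mul_of_nonneg_right (show N F * ε ≤ 40 * mx * Wt f by linarith) hn.le]
  · -- the corrected word has many violations
    refine ⟨0, Submodule.zero_mem _, ?_⟩
    apply hfinal
    have hloc : ∀ g, ε * w F g ≤ 2 * (avg (rt B) (fun h => XA A B hA F h / α) g +
        avg (lt A) (fun h => XB A B hB F h / β) g) := by
      intro g
      obtain ⟨m, hm, hag⟩ := agree A B CA CB hA hB ε hα hβ h1c F hF g
      have h1 := hlocmin g m hm
      by_cases hwg : w F g = 0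
      · rw [hwg, mul_zero]
        have : ∀ (I : Type _) [Fintype I] (σ : I → G → G) (u : G → ℝ), (∀ g, 0 ≤ u g) →
            0 ≤ avg σ u g := fun I _ σ u hu => by
          rw [avg_apply]
          exact div_nonneg (Finset.sum_nonneg fun i _ => hu _) (Nat.cast_nonneg _)
        have r1 := this _ (rt B) (fun h => XA A B hA F h / α) fun g => div_nonneg (hXA0 F g) hα.le
        have r2 := this _ (lt A) (fun h => XB A B hB F h / β) fun g => div_nonneg (hXB0 F g) hβ.le
        linarith
      · have h2 := hθ F g hwg
        set y := ((∑ a, badAt row (lt A) (sinv A hA) F g m a) / α +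
          (∑ b, badAt col (rt B) (sinv B hB) F g m b) / β) / 2
        have h3 : w F g ≤ 2 * y := by linarith
        have h4 := mul_le_mul_of_nonneg_left h3 hε0.le
        linarith
    have hc := core (lt A) (sinv A hA) (sinv_sinv A hA) (lt_inv A hA)
      (rt B) (sinv B hB) (sinv_sinv B hB) (rt_inv B hB) ε hε0 hε1
      (left_exp A _ h2a) (right_exp B _ h2b)
      (fun h => XA A B hA F h / α) (fun h => XB A B hB F h / β)
      (fun g => div_nonneg (hXA0 F g) hα.le) (fun g => div_nonneg (hXB0 F g) hβ.le)
      (1 / (2 * mx)) (hθ F) hloc hpos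
    have hc' : 1 / (2 * mx) * ε * (Fintype.card G : ℝ) ≤ 20 * Wt F := hc
    have hWF : Wt F ≤ Wt f := by
      have := mul_nonneg hcpos.le hN0
      linarith
    have hd1 : ((Finset.univ.filter fun g : G => f g ≠ (0 : G → ↥A → ↥B → 𝔽) g).card : ℝ) /
        (Fintype.card G : ℝ) ≤ 1 := by
      rw [div_le_one hn]
      exact_mod_cast Finset.card_le_univ _
    refine hd1.trans ?_
    rw [le_div_iff₀ (by positivity), one_mul]
    have h5 : 1 / (2 * mx) * ε * (Fintype.card G : ℝ) ≤ 20 * Wt f := by linarith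
    have h6 : 1 / (2 * mx) * ε * (Fintype.card G : ℝ) = (ε * (Fintype.card G : ℝ)) / (2 * mx) := by
      field_simp
    rw [h6, div_le_iff₀ (by positivity)] at h5
    linarith

end Sound

end FK6

/-- the `0`-cocycle code of the double Cayley complex is a good `2`-query LTC. -/
theorem statement6
    (G : Type) [Group G] [Fintype G] [DecidableEq G]
    (A B : Finset G)
    (hA1 : (1 : G) ∉ A) (hB1 : (1 : G) ∉ B)
    (hAinv : ∀ a ∈ A, a⁻¹ ∈ A) (hBinv : ∀ b ∈ B, b⁻¹ ∈ B)
    (hAgen : Subgroup.closure (A : Set G) = ⊤) (hBgen : Subgroup.closure (B : Set G) = ⊤)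
    (htnc : ∀ (g : G), ∀ a ∈ A, ∀ b ∈ B, g * a * g⁻¹ ≠ b)
    (𝔽 : Type) [Field 𝔽] [Fintype 𝔽]
    (CA : Submodule 𝔽 (↥A → 𝔽)) (CB : Submodule 𝔽 (↥B → 𝔽))
    (ε : ℝ) (hε0 : 0 < ε) (hε1 : ε ≤ 1)
    -- (1a)  δ(C_A) ≥ ε
    (h1a : ∀ c ∈ CA, c ≠ 0 →
      ε ≤ ((Finset.univ.filter fun a : ↥A => c a ≠ 0).card : ℝ) / (A.card : ℝ))
    -- (1b)  δ(C_B) ≥ ε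
    (h1b : ∀ c ∈ CB, c ≠ 0 →
      ε ≤ ((Finset.univ.filter fun b : ↥B => c b ≠ 0).card : ℝ) / (B.card : ℝ))
    -- (1c)  C_A ⊗ C_B is ε-agreement testable
    (h1c : FK6.AgreementTestable CA CB ε)
    -- (2)  Cay(A,G) and Cay(G,B) are (ε²/2500)-expanders
    (h2a : FK6.IsLeftCayleyExpander A (ε ^ 2 / 2500))
    (h2b : FK6.IsRightCayleyExpander B (ε ^ 2 / 2500)) :
    -- (i)  δ(Z⁰) ≥ 0.9996·ε
    (∀ m ∈ FK6.Z0 A B CA CB hAinv hBinv, m ≠ 0 →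
      0.9996 * ε ≤ ((Finset.univ.filter fun g : G => m g ≠ 0).card : ℝ) / (Fintype.card G : ℝ)) ∧
    -- (ii)  rate bound
    ((Fintype.card G : ℝ) *
        ((Module.finrank 𝔽 ↥CA : ℝ) * (Module.finrank 𝔽 ↥CB : ℝ) -
          3 / 4 * (A.card : ℝ) * (B.card : ℝ)) ≤
      (Module.finrank 𝔽 ↥(FK6.Z0 A B CA CB hAinv hBinv) : ℝ)) ∧
    -- (iii)  soundness of the natural 2-query tester
    (∀ f : G → ↥A → ↥B → 𝔽, (∀ g : G, f g ∈ FK6.tensorCode CA CB) →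
      (1 / (max ((A.card : ℝ) / (B.card : ℝ)) ((B.card : ℝ) / (A.card : ℝ)) *
            (250000 / ε ^ 3 + 4800 * max (A.card : ℝ) (B.card : ℝ) / ε))) *
          sInf {r : ℝ | ∃ m ∈ FK6.Z0 A B CA CB hAinv hBinv,
            r = ((Finset.univ.filter fun g : G => f g ≠ m g).card : ℝ) / (Fintype.card G : ℝ)}
        ≤ ((FK6.violatedEdges A B hAinv hBinv f).card : ℝ) /
            ((Fintype.card G : ℝ) * ((A.card : ℝ) + (B.card : ℝ)) / 2)) := by
  refine ⟨fun m hm hm0 => FK6.distance A B CA CB hAinv hBinv ε hε0 hε1 h1a h2a m hm hm0,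
    FK6.rate A B CA CB hAinv hBinv, ?_⟩
  intro f hf
  rcases A.eq_empty_or_nonempty with hAe | hAn
  · subst hAe
    simp only [Finset.card_empty, Nat.cast_zero, zero_div, div_zero, max_self, zero_mul]
    positivity
  rcases B.eq_empty_or_nonempty with hBe | hBn
  · subst hBe
    simp only [Finset.card_empty, Nat.cast_zero, zero_div, div_zero, max_self, zero_mul]
    positivity
  obtain ⟨m, hm, hd⟩ := FK6.soundness A B CA CB hA1 hB1 hAinv hBinv htnc ε hε0 hε1 hAn hBn
    h1c h2a h2b f hf
  have hα : (0 : ℝ) < A.card := by exact_mod_cast hAn.card_pos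
  have hβ : (0 : ℝ) < B.card := by exact_mod_cast hBn.card_pos
  have hn : (0 : ℝ) < Fintype.card G := by exact_mod_cast Fintype.card_pos
  have hV : (0 : ℝ) ≤ (FK6.violatedEdges A B hAinv hBinv f).card := Nat.cast_nonneg _
  have hle : sInf {r : ℝ | ∃ m ∈ FK6.Z0 A B CA CB hAinv hBinv,
      r = ((Finset.univ.filter fun g : G => f g ≠ m g).card : ℝ) / (Fintype.card G : ℝ)} ≤
      ((Finset.univ.filter fun g : G => f g ≠ m g).card : ℝ) / (Fintype.card G : ℝ) := by
    refine csInf_le ⟨0, ?_⟩ ⟨m, hm, rfl⟩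
    rintro r ⟨m', -, rfl⟩
    positivity
  have hd := hle.trans hd
  set d := sInf {r : ℝ | ∃ m ∈ FK6.Z0 A B CA CB hAinv hBinv,
      r = ((Finset.univ.filter fun g : G => f g ≠ m g).card : ℝ) / (Fintype.card G : ℝ)}
  set V : ℝ := ((FK6.violatedEdges A B hAinv hBinv f).card : ℝ)
  set α : ℝ := (A.card : ℝ)
  set β : ℝ := (B.card : ℝ)
  set n : ℝ := (Fintype.card G : ℝ)
  have hmx0 : 0 < max α β := lt_max_of_lt_left hα
  have hmn0 : 0 < min α β := lt_min hα hβ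
  have hM : max α β / min α β ≤ max (α / β) (β / α) := by
    rcases le_total α β with h | h
    · rw [max_eq_right h, min_eq_left h]; exact le_max_right _ _
    · rw [max_eq_left h, min_eq_right h]; exact le_max_left _ _
  have hM0 : 0 < max α β / min α β := by positivity
  have hK : 4800 * max α β / ε ≤ 250000 / ε ^ 3 + 4800 * max α β / ε := by
    have : 0 ≤ 250000 / ε ^ 3 := by positivity
    linarith
  have hK0 : 0 < 4800 * max α β / ε := by positivity
  have hVD : V / (n * max α β) ≤ V / (n * (α + β) / 2) := by
    apply div_le_div_of_nonneg_left hV (by positivity)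
    have : α + β ≤ 2 * max α β := by linarith [le_max_left α β, le_max_right α β]
    nlinarith
  rw [one_div, inv_mul_le_iff₀ (mul_pos (hM0.trans_le hM) (hK0.trans_le hK))]
  have hprod : (max α β / min α β) * (4800 * max α β / ε) * (V / (n * max α β)) ≤
      max (α / β) (β / α) * (250000 / ε ^ 3 + 4800 * max α β / ε) * (V / (n * (α + β) / 2)) := by
    gcongr
  refine hd.trans (le_trans ?_ hprod)
  have e : (max α β / min α β) * (4800 * max α β / ε) * (V / (n * max α β)) =
      4800 * max α β * V / (ε * n * min α β) := by
    field_simp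
  rw [e]
  gcongr
  norm_num
end
end

section
/- Let G be a finite group, A, B ⊆ G∖{1} symmetric generating sets with gag^{−1} ≠ b for all a ∈ A, b ∈ B, g ∈ G, let X = Cay(A,G,B) be the double Cayley complex with its natural weight function w, and let λ ≥ 0. Suppose the Cayley graphs Cay(A,G) and Cay(G,B), with their natural weight functions, are λ-expanders. Then: (i) the underlying weighted graph ugr(X,w) (vertex set G with vertex weights 1/|G|; edges {g,ag} of weight 1/(|A||G|) and {g,gb} of weight 1/(|B||G|)) is a λ-expander, and in particular a (λ,1)-skeleton expander; (ii) the weighted no-intersection graph NNI^{1,1,2}(X,w) — whose vertices are the edges of X with the weights above, and which has, for each square s = {g,ag,gb,agb} of X, one edge of weight w(s) = 4/(|A||B||G|) joining each of the two pairs of opposite sides of s — is a (2λ, 4·max{|A|,|B|})-skeleton expander, and consequently so is the related weighted hypergraph NI^{1,1,2}(X,w). -/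
open scoped Classical

noncomputable section

namespace FK9

variable {G : Type*} [Group G] [Fintype G] [DecidableEq G]

/-- The `A`-type edges of the double Cayley complex having both endpoints in `U`. -/
def aEdgesIn (A : Finset G) (U : Finset G) : Finset (Finset G) :=
  Finset.univ.filter fun e => ∃ g : G, ∃ a ∈ A, e = {g, a * g} ∧ g ∈ U ∧ a * g ∈ U

/-- The `B`-type edges of the double Cayley complex having both endpoints in `U`. -/
def bEdgesIn (B : Finset G) (U : Finset G) : Finset (Finset G) :=
  Finset.univ.filter fun e => ∃ g : G, ∃ b ∈ B, e = {g, g * b} ∧ g ∈ U ∧ g * b ∈ U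

/-- The edges of the double Cayley complex `Cay(A, G, B)`. -/
def xEdges (A B : Finset G) : Finset (Finset G) :=
  Finset.univ.filter fun e =>
    (∃ g : G, ∃ a ∈ A, e = {g, a * g}) ∨ ∃ g : G, ∃ b ∈ B, e = {g, g * b}

/-- The squares of the double Cayley complex `Cay(A, G, B)`. -/
def xSquares (A B : Finset G) : Finset (Finset G) :=
  Finset.univ.filter fun s =>
    ∃ g : G, ∃ a ∈ A, ∃ b ∈ B, s = {g, a * g, g * b, a * g * b}

/-- The edges of the no-intersection graph `NNI^{1,1,2}(Cay(A,G,B))`: for each square,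
one edge joining each of the two pairs of opposite sides. -/
def nniEdges (A B : Finset G) : Finset (Finset (Finset G)) :=
  Finset.univ.filter fun pr =>
    ∃ g : G, ∃ a ∈ A, ∃ b ∈ B,
      pr = {({g, a * g} : Finset G), ({g * b, a * g * b} : Finset G)} ∨
      pr = {({g, g * b} : Finset G), ({a * g, a * g * b} : Finset G)}

/-- The natural weight of an edge of the double Cayley complex. -/
def edgeWeight (A B : Finset G) (e : Finset G) : ℝ :=
  if ∃ g : G, ∃ a ∈ A, e = {g, a * g} then 1 / ((A.card : ℝ) * (Fintype.card G : ℝ))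
  else 1 / ((B.card : ℝ) * (Fintype.card G : ℝ))

/-- The left Cayley graph `Cay(A, G)`, with its natural weight function, is a
`λ`-expander. -/
def IsLeftCayleyExpander (A : Finset G) (lam : ℝ) : Prop :=
  ∀ (μ : ℝ) (f : G → ℝ), f ≠ 0 → (∑ g : G, f g) = 0 →
    (∀ g : G, (∑ a ∈ A, f (a * g)) / (A.card : ℝ) = μ * f g) → μ ≤ lam

/-- The right Cayley graph `Cay(G, B)`, with its natural weight function, is a
`λ`-expander. -/
def IsRightCayleyExpander (B : Finset G) (lam : ℝ) : Prop :=
  ∀ (μ : ℝ) (f : G → ℝ), f ≠ 0 → (∑ g : G, f g) = 0 →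
    (∀ g : G, (∑ b ∈ B, f (g * b)) / (B.card : ℝ) = μ * f g) → μ ≤ lam

end FK9

namespace FK9Aux

lemma symm_quad {E : Type*} [NormedAddCommGroup E] [InnerProductSpace ℝ E]
    [FiniteDimensional ℝ E] (T : E →ₗ[ℝ] E) (hT : T.IsSymmetric) (lam : ℝ)
    (h : ∀ (μ : ℝ) (x : E), x ≠ 0 → T x = μ • x → μ ≤ lam) (x : E) :
    inner ℝ x (T x) ≤ lam * inner ℝ x x := by
  set b := hT.eigenvectorBasis rfl with hb
  rw [← b.sum_inner_mul_inner x (T x), ← b.sum_inner_mul_inner x x, Finset.mul_sum]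
  apply Finset.sum_le_sum
  intro i _
  have h1 : T (b i) = (hT.eigenvalues rfl i : ℝ) • b i := by
    exact hT.apply_eigenvectorBasis rfl i
  have h2 := h _ (b i) (b.orthonormal.ne_zero i) h1
  rw [← hT (b i) x, h1, inner_smul_left, real_inner_comm x (b i)]
  simp only [conj_trivial]
  nlinarith [mul_self_nonneg (inner ℝ x (b i))]

variable {G V : Type*} [Group G] [Fintype V]

/-- averaged action -/
def op (S : Finset G) (σ : G → Equiv.Perm V) (f : V → ℝ) (g : V) : ℝ :=
  (∑ s ∈ S, f (σ s g)) / (S.card : ℝ)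

lemma op_sum (S : Finset G) (σ : G → Equiv.Perm V) (f : V → ℝ) (hf : ∑ g, f g = 0) :
    ∑ g, op S σ f g = 0 := by
  unfold op
  rw [← Finset.sum_div, Finset.sum_comm]
  simp [fun s => Equiv.sum_comp (σ s) f, hf]

lemma op_symm (S : Finset G) (σ : G → Equiv.Perm V) (hσ : ∀ s, (σ s).symm = σ s⁻¹)
    (hS : ∀ s ∈ S, s⁻¹ ∈ S) (f k : V → ℝ) :
    ∑ g, f g * op S σ k g = ∑ g, op S σ f g * k g := by
  unfold op
  simp only [mul_div_assoc', div_mul_eq_mul_div]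
  rw [← Finset.sum_div, ← Finset.sum_div]
  congr 1
  simp only [Finset.mul_sum, Finset.sum_mul]
  rw [Finset.sum_comm, Finset.sum_comm (t := S)]
  refine Finset.sum_nbij' (fun s => s⁻¹) (fun s => s⁻¹) hS hS (by simp) (by simp) ?_
  intro s _
  rw [← Equiv.sum_comp (σ s) (fun g => f (σ s⁻¹ g) * k g)]
  apply Finset.sum_congr rfl
  intro g _
  rw [← hσ]; simp

lemma quad (S : Finset G) (σ : G → Equiv.Perm V) (hσ : ∀ s, (σ s).symm = σ s⁻¹)
    (hS : ∀ s ∈ S, s⁻¹ ∈ S) (lam : ℝ)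
    (h : ∀ (μ : ℝ) (f : V → ℝ), f ≠ 0 → (∑ g : V, f g) = 0 →
      (∀ g : V, op S σ f g = μ * f g) → μ ≤ lam) (f : V → ℝ) (hf : ∑ g, f g = 0) :
    ∑ g, f g * op S σ f g ≤ lam * ∑ g, f g * f g := by
  let E : Submodule ℝ (EuclideanSpace ℝ V) :=
    { carrier := {x | ∑ g, x g = 0}
      add_mem' := by
        intro x y hx hy
        simp only [Set.mem_ofPred_eq, PiLp.add_apply] at *
        rw [Finset.sum_add_distrib, hx, hy, add_zero]
      zero_mem' := by simp
      smul_mem' := by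
        intro c x hx
        simp only [Set.mem_ofPred_eq, PiLp.smul_apply, smul_eq_mul] at *
        rw [← Finset.mul_sum, hx, mul_zero] }
  let T : E →ₗ[ℝ] E :=
    { toFun := fun x => ⟨WithLp.toLp 2 (op S σ (fun g => x.1 g)), op_sum S σ _ x.2⟩
      map_add' := by
        intro x y
        apply Subtype.ext
        ext g
        simp [op, Finset.sum_add_distrib, add_div]
      map_smul' := by
        intro c x
        apply Subtype.ext
        ext g
        simp [op, ← Finset.mul_sum, mul_div_assoc] }
  have hin : ∀ x y : E, inner ℝ x y = ∑ g, x.1 g * y.1 g := by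
    intro x y
    rw [Submodule.coe_inner, PiLp.inner_apply]
    apply Finset.sum_congr rfl
    intro g _
    simp [mul_comm]
  have hT : T.IsSymmetric := by
    intro x y
    rw [hin, hin]
    exact (op_symm S σ hσ hS _ _).symm
  have key := symm_quad T hT lam (by
    intro μ x hx hTx
    apply h μ (fun g => x.1 g) _ x.2
    · intro g
      have := congrArg (fun z : E => z.1 g) hTx
      simpa [T] using this
    · intro h0
      apply hx
      apply Subtype.ext
      ext g
      simpa using congrFun h0 g) ⟨WithLp.toLp 2 f, hf⟩
  rw [hin, hin] at key
  exact key

lemma ind_bound [DecidableEq V] (S : Finset G) (σ : G → Equiv.Perm V)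
    (hσ : ∀ s, (σ s).symm = σ s⁻¹)
    (hS : ∀ s ∈ S, s⁻¹ ∈ S) (lam : ℝ) (hlam : 0 ≤ lam)
    (h : ∀ (μ : ℝ) (f : V → ℝ), f ≠ 0 → (∑ g : V, f g) = 0 →
      (∀ g : V, op S σ f g = μ * f g) → μ ≤ lam) (P : Finset V) :
    ((((Finset.univ : Finset V) ×ˢ S).filter fun x => x.1 ∈ P ∧ σ x.2 x.1 ∈ P).card : ℝ) ≤
      S.card * (lam * P.card + (P.card : ℝ) ^ 2 / Fintype.card V) := by
  rcases S.eq_empty_or_nonempty with rfl | hne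
  · simp
  rcases isEmpty_or_nonempty V with hV | hV
  · simp [Finset.univ_eq_empty, Subsingleton.elim P ∅]
  have hs : (0 : ℝ) < S.card := by exact_mod_cast hne.card_pos
  have hn : (0 : ℝ) < Fintype.card V := by exact_mod_cast Fintype.card_pos
  set n : ℝ := (Fintype.card V : ℝ) with hnd
  set p : ℝ := (P.card : ℝ) with hp
  let i : V → ℝ := fun g => if g ∈ P then 1 else 0
  have hi : ∑ g, i g = p := by simp [i, hp]
  have hii : ∑ g, i g * i g = p := by simp [i, hp]
  have hcount : ((((Finset.univ : Finset V) ×ˢ S).filter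
      fun x => x.1 ∈ P ∧ σ x.2 x.1 ∈ P).card : ℝ) = S.card * ∑ g, i g * op S σ i g := by
    rw [Finset.card_filter]
    push_cast
    rw [Finset.sum_product, Finset.mul_sum]
    apply Finset.sum_congr rfl
    intro g _
    unfold op
    rw [mul_div_assoc', mul_div_cancel₀ _ hs.ne', Finset.mul_sum]
    apply Finset.sum_congr rfl
    intro s _
    by_cases h1 : g ∈ P <;> simp [i, h1]
  have hopc : ∀ g, op S σ (fun g => i g - p / n) g = op S σ i g - p / n := by
    intro g
    unfold op
    rw [Finset.sum_sub_distrib, sub_div]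
    simp [hs.ne']
  have hopi : ∑ g, op S σ i g = p := by
    have := op_symm S σ hσ hS i (fun _ => 1)
    simp only [mul_one] at this
    rw [← this, ← hi]
    apply Finset.sum_congr rfl
    intro g _
    simp [op, hs.ne']
  have hz : ∑ g, (i g - p / n) = 0 := by
    rw [Finset.sum_sub_distrib, hi]
    simp [← hnd]; field_simp; simp
  have q := quad S σ hσ hS lam h (fun g => i g - p / n) hz
  simp only [hopc] at q
  have e1 : ∑ g, (i g - p / n) * (op S σ i g - p / n) = ∑ g, i g * op S σ i g - p ^ 2 / n := by
    have : ∀ g, (i g - p / n) * (op S σ i g - p / n) =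
      i g * op S σ i g - p / n * i g - p / n * op S σ i g + (p / n) ^ 2 := by intro g; ring
    simp only [this]
    rw [Finset.sum_add_distrib, Finset.sum_sub_distrib, Finset.sum_sub_distrib,
      ← Finset.mul_sum, ← Finset.mul_sum, hi, hopi]
    simp only [Finset.sum_const, Finset.card_univ, nsmul_eq_mul, ← hnd]
    field_simp; ring
  have e2 : ∑ g, (i g - p / n) * (i g - p / n) = p - p ^ 2 / n := by
    have : ∀ g, (i g - p / n) * (i g - p / n) =
      i g * i g - 2 * (p / n) * i g + (p / n) ^ 2 := by intro g; ring
    simp only [this]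
    rw [Finset.sum_add_distrib, Finset.sum_sub_distrib,
      ← Finset.mul_sum, hi, hii]
    simp only [Finset.sum_const, Finset.card_univ, nsmul_eq_mul, ← hnd]
    field_simp; ring
  rw [e1, e2] at q
  rw [hcount]
  apply mul_le_mul_of_nonneg_left _ hs.le
  have : 0 ≤ lam * (p ^ 2 / n) := by positivity
  nlinarith

lemma edges_count [DecidableEq V] (S : Finset G) (σ : G → Equiv.Perm V)
    (hσ : ∀ s, (σ s).symm = σ s⁻¹)
    (hS : ∀ s ∈ S, s⁻¹ ∈ S) (hfree : ∀ s ∈ S, ∀ g, σ s g ≠ g) (P : Finset V)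
    (Ed : Finset (Finset V))
    (hE : ∀ e ∈ Ed, ∃ g : V, ∃ s ∈ S, e = {g, σ s g} ∧ g ∈ P ∧ σ s g ∈ P) :
    2 * Ed.card ≤
    (((Finset.univ : Finset V) ×ˢ S).filter fun x => x.1 ∈ P ∧ σ x.2 x.1 ∈ P).card := by
  have hback : ∀ s g, σ s⁻¹ (σ s g) = g := by intro s g; rw [← hσ]; simp
  set X := (((Finset.univ : Finset V) ×ˢ S).filter fun x => x.1 ∈ P ∧ σ x.2 x.1 ∈ P) with hX
  set φ : V × G → Finset V := fun x => {x.1, σ x.2 x.1} with hφ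
  have h1 : 2 * Ed.card ≤ (X.filter fun x => φ x ∈ Ed).card := by
    apply Finset.mul_card_image_le_card_of_maps_to (f := φ)
    · intro x hx; exact (Finset.mem_filter.1 hx).2
    · intro e he
      obtain ⟨g, s, hs, rfl, hg, hg'⟩ := hE e he
      have hpair : ({(g, s), (σ s g, s⁻¹)} : Finset (V × G)).card = 2 := by
        rw [Finset.card_pair]
        intro hh
        exact hfree s hs g (Prod.ext_iff.1 hh).1.symm
      rw [← hpair]
      apply Finset.card_le_card
      intro x hx
      simp only [Finset.mem_insert, Finset.mem_singleton] at hx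
      rcases hx with rfl | rfl
      · simp [hX, hφ, hs, hg, hg', he]
      · simp [hX, hφ, hS s hs, hg, hg', hback, Finset.pair_comm (σ s g) g, he]
  exact h1.trans (Finset.card_le_card (Finset.filter_subset _ _))

lemma edges_upper [DecidableEq V] (S : Finset G) (σ : G → Equiv.Perm V)
    (hinj : ∀ g s s', σ s g = σ s' g → s = s')
    (hfree : ∀ s ∈ S, ∀ g, σ s g ≠ g)
    (Ed : Finset (Finset V)) :
    (∑ s ∈ S, ((Finset.univ : Finset V).filter fun g => ({g, σ s g} : Finset V) ∈ Ed).card) ≤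
      2 * (Ed.filter fun e => ∃ g : V, ∃ s ∈ S, e = {g, σ s g}).card := by
  have e1 : (∑ s ∈ S, ((Finset.univ : Finset V).filter
      fun g => ({g, σ s g} : Finset V) ∈ Ed).card) =
      (((Finset.univ : Finset V) ×ˢ S).filter
        fun x => ({x.1, σ x.2 x.1} : Finset V) ∈ Ed).card := by
    simp only [Finset.card_filter]
    rw [Finset.sum_product_right]
  rw [e1]
  apply Finset.card_le_mul_card_image_of_maps_to
    (f := fun x : V × G => ({x.1, σ x.2 x.1} : Finset V))
  · intro x hx
    simp only [Finset.mem_filter, Finset.mem_product, Finset.mem_univ, true_and] at hx ⊢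
    exact ⟨hx.2, x.1, x.2, hx.1, rfl⟩
  · intro e he
    simp only [Finset.mem_filter] at he
    obtain ⟨_, g, s, hs, rfl⟩ := he
    refine le_trans ?_ (Finset.card_le_two (a := g) (b := σ s g))
    apply Finset.card_le_card_of_injOn (fun x => x.1)
    · intro x hx
      simp only [Finset.coe_filter, Set.mem_ofPred_eq] at hx
      rw [Finset.mem_coe, ← hx.2]
      simp
    · intro x hx y hy hxy
      simp only [Finset.coe_filter, Set.mem_ofPred_eq, Finset.mem_filter, Finset.mem_product,
        Finset.mem_univ, true_and] at hx hy
      obtain ⟨g1, s1⟩ := x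
      obtain ⟨g2, s2⟩ := y
      simp only at hxy
      subst hxy
      have h1 := hx.2.trans hy.2.symm
      have h2 : σ s1 g1 ∈ ({g1, σ s2 g1} : Finset V) := by
        simp only at h1
        rw [← h1]; simp
      simp only [Finset.mem_insert, Finset.mem_singleton] at h2
      rcases h2 with h2 | h2
      · exact absurd h2 (hfree s1 hx.1.1 g1)
      · rw [hinj _ _ _ h2]

lemma nni_count [DecidableEq V] (S T : Finset G) (σ τ : G → Equiv.Perm V)
    (hσ : ∀ s, (σ s).symm = σ s⁻¹) (hτ : ∀ s, (τ s).symm = τ s⁻¹)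
    (hS : ∀ s ∈ S, s⁻¹ ∈ S) (hT : ∀ s ∈ T, s⁻¹ ∈ T)
    (hcomm : ∀ s t g, τ t (σ s g) = σ s (τ t g))
    (hσf : ∀ s ∈ S, ∀ g, σ s g ≠ g) (hτf : ∀ s ∈ T, ∀ g, τ s g ≠ g)
    (hne : ∀ s ∈ S, ∀ t ∈ T, ∀ g, σ s g ≠ τ t g)
    (hinj : ∀ g s s', σ s g = σ s' g → s = s')
    (lam : ℝ) (hlam : 0 ≤ lam)
    (h : ∀ (μ : ℝ) (f : V → ℝ), f ≠ 0 → (∑ g : V, f g) = 0 →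
      (∀ g : V, op T τ f g = μ * f g) → μ ≤ lam)
    (U : Finset (Finset V)) (N : Finset (Finset (Finset V)))
    (hN : ∀ pr ∈ N, pr ⊆ U ∧ ∃ g : V, ∃ s ∈ S, ∃ t ∈ T,
      pr = {({g, σ s g} : Finset V), ({τ t g, τ t (σ s g)} : Finset V)}) (u : ℝ)
    (hu : ((U.filter fun e => ∃ g : V, ∃ s ∈ S, e = {g, σ s g}).card : ℝ) = u) :
    4 * (N.card : ℝ) ≤ T.card * (2 * lam * u + 4 * u ^ 2 / Fintype.card V) := by
  have hσb : ∀ s g, σ s⁻¹ (σ s g) = g := by intro s g; rw [← hσ]; simp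
  have hτb : ∀ s g, τ s⁻¹ (τ s g) = g := by intro s g; rw [← hτ]; simp
  let P : G → Finset V := fun s => Finset.univ.filter fun g => ({g, σ s g} : Finset V) ∈ U
  let X : Finset (G × V × G) := (S ×ˢ ((Finset.univ : Finset V) ×ˢ T)).filter
    fun x => x.2.1 ∈ P x.1 ∧ τ x.2.2 x.2.1 ∈ P x.1
  have hXcard : (X.card : ℝ) ≤
      ∑ s ∈ S, T.card * (lam * (P s).card + ((P s).card : ℝ) ^ 2 / Fintype.card V) := by
    have : X.card = ∑ s ∈ S, (((Finset.univ : Finset V) ×ˢ T).filter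
        fun x => x.1 ∈ P s ∧ τ x.2 x.1 ∈ P s).card := by
      simp only [X, Finset.card_filter]
      rw [Finset.sum_product]
    rw [this]
    push_cast
    apply Finset.sum_le_sum
    intro s _
    exact ind_bound T τ hτ hT lam hlam h (P s)
  have hP : (∑ s ∈ S, ((P s).card : ℝ)) ≤ 2 * u := by
    rw [← hu]
    exact_mod_cast edges_upper S σ hinj hσf U
  have hP2 : (∑ s ∈ S, ((P s).card : ℝ) ^ 2) ≤ 4 * u ^ 2 := by
    have h1 : (∑ s ∈ S, ((P s).card : ℝ) ^ 2) ≤ (∑ s ∈ S, ((P s).card : ℝ)) ^ 2 :=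
      Finset.sum_sq_le_sq_sum_of_nonneg (fun _ _ => Nat.cast_nonneg _)
    have h0 : 0 ≤ (∑ s ∈ S, ((P s).card : ℝ)) := Finset.sum_nonneg fun _ _ => Nat.cast_nonneg _
    nlinarith
  have hXN : 4 * N.card ≤ X.card := by
    let φ : G × V × G → Finset (Finset V) := fun x =>
      {({x.2.1, σ x.1 x.2.1} : Finset V), ({τ x.2.2 x.2.1, τ x.2.2 (σ x.1 x.2.1)} : Finset V)}
    have h1 : 4 * N.card ≤ (X.filter fun x => φ x ∈ N).card := by
      apply Finset.mul_card_image_le_card_of_maps_to (f := φ)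
      · intro x hx; exact (Finset.mem_filter.1 hx).2
      · intro e he
        obtain ⟨hsub, g, s, hs, t, ht, rfl⟩ := hN e he
        have m1 : ({g, σ s g} : Finset V) ∈ U := hsub (by simp)
        have m2 : ({τ t g, τ t (σ s g)} : Finset V) ∈ U := hsub (by simp)
        have m2' : ({τ t g, σ s (τ t g)} : Finset V) ∈ U := by rwa [← hcomm]
        have n1 := hσf s hs g
        have n2 := hτf t ht g
        have n3 := hne s hs t ht g
        have n4 : τ t (σ s g) ≠ g := by
          intro hh
          apply hne s hs t⁻¹ (hT t ht) g
          rw [← hτb t (σ s g), hh]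
        have n5 : τ t (σ s g) ≠ σ s g := hτf t ht _
        have n6 : τ t (σ s g) ≠ τ t g := fun hh => n1 ((τ t).injective hh)
        let Q : Finset (G × V × G) :=
          {(s, g, t), (s⁻¹, σ s g, t), (s, τ t g, t⁻¹), (s⁻¹, τ t (σ s g), t⁻¹)}
        have hQ : Q.card = 4 := by
          have a1 : (s⁻¹, σ s g, t) ∉
            ({(s, τ t g, t⁻¹), (s⁻¹, τ t (σ s g), t⁻¹)} : Finset (G × V × G)) := by
            simp [n3, n5.symm]
          have a2 : (s, g, t) ∉ ({(s⁻¹, σ s g, t), (s, τ t g, t⁻¹),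
            (s⁻¹, τ t (σ s g), t⁻¹)} : Finset (G × V × G)) := by
            simp [n1.symm, n2.symm, n4.symm]
          have a3 : (s, τ t g, t⁻¹) ∉ ({(s⁻¹, τ t (σ s g), t⁻¹)} : Finset (G × V × G)) := by
            simp only [Finset.mem_singleton, Prod.mk.injEq, not_and]
            intro _ hh; exact absurd hh.symm n6
          change Finset.card {(s, g, t), (s⁻¹, σ s g, t), (s, τ t g, t⁻¹), (s⁻¹, τ t (σ s g), t⁻¹)} = 4
          rw [Finset.card_insert_of_notMem a2, Finset.card_insert_of_notMem a1,
            Finset.card_insert_of_notMem a3, Finset.card_singleton]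
        rw [← hQ]
        apply Finset.card_le_card
        intro x hx
        have hXmem : ∀ s g t, (s, g, t) ∈ X ↔ s ∈ S ∧ t ∈ T ∧
            ({g, σ s g} : Finset V) ∈ U ∧ ({τ t g, σ s (τ t g)} : Finset V) ∈ U := by
          intro s g t
          simp [X, P, and_assoc]
        have c1 := Finset.pair_comm (σ s g) g
        have c2 := Finset.pair_comm (σ s (τ t g)) (τ t g)
        rw [hcomm] at he
        change x ∈ ({(s, g, t), (s⁻¹, σ s g, t), (s, τ t g, t⁻¹), (s⁻¹, τ t (σ s g), t⁻¹)} :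
          Finset (G × V × G)) at hx
        simp only [Finset.mem_insert, Finset.mem_singleton] at hx
        rw [Finset.mem_filter, Finset.mem_filter]
        rcases hx with rfl | rfl | rfl | rfl
        · refine ⟨⟨(hXmem _ _ _).2 ⟨hs, ht, m1, m2'⟩, ?_⟩, ?_⟩
          · rw [← hcomm] at he; exact he
          · rfl
        · have e : φ (s⁻¹, σ s g, t) = {{g, σ s g}, {τ t g, σ s (τ t g)}} := by
            simp only [φ, hσb, hcomm, c1, c2]
          refine ⟨⟨(hXmem _ _ _).2 ⟨hS s hs, ht, ?_, ?_⟩, ?_⟩, ?_⟩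
          · rw [hσb, c1]; exact m1
          · rw [hcomm, hσb, c2]; exact m2'
          · rw [e]; exact he
          · rw [e, hcomm]
        · have e : φ (s, τ t g, t⁻¹) = {{g, σ s g}, {τ t g, σ s (τ t g)}} := by
            simp only [φ, ← hcomm, hτb]
            exact Finset.pair_comm _ _
          refine ⟨⟨(hXmem _ _ _).2 ⟨hs, hT t ht, m2', ?_⟩, ?_⟩, ?_⟩
          · rw [hτb]; exact m1
          · rw [e]; exact he
          · rw [e, hcomm]
        · have e : φ (s⁻¹, τ t (σ s g), t⁻¹) = {{g, σ s g}, {τ t g, σ s (τ t g)}} := by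
            have : σ s⁻¹ (τ t (σ s g)) = τ t g := by rw [← hcomm, hσb]
            simp only [φ, this, hτb]
            rw [hcomm, c1, c2]
            exact Finset.pair_comm _ _
          refine ⟨⟨(hXmem _ _ _).2 ⟨hS s hs, hT t ht, ?_, ?_⟩, ?_⟩, ?_⟩
          · rw [hcomm, hσb, c2]; exact m2'
          · rw [hτb, hσb, c1]; exact m1
          · rw [e]; exact he
          · rw [e, hcomm]
    exact h1.trans (Finset.card_le_card (Finset.filter_subset _ _))
  have hXN' : 4 * (N.card : ℝ) ≤ X.card := by exact_mod_cast hXN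
  refine hXN'.trans (hXcard.trans ?_)
  rw [← Finset.mul_sum, Finset.sum_add_distrib, ← Finset.mul_sum, ← Finset.sum_div]
  apply mul_le_mul_of_nonneg_left _ (Nat.cast_nonneg _)
  have : lam * ∑ s ∈ S, ((P s).card : ℝ) ≤ lam * (2 * u) := mul_le_mul_of_nonneg_left hP hlam
  have h3 : (∑ s ∈ S, ((P s).card : ℝ) ^ 2) / Fintype.card V ≤ 4 * u ^ 2 / Fintype.card V := by
    gcongr
  linarith

end FK9Aux

open FK9 in
/-- expansion of the one-sided Cayley graphs yields expansion and skeleton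
expansion of `ugr(Cay(A,G,B))` and of its no-intersection (hyper)graphs. -/
theorem statement9
    (G : Type) [Group G] [Fintype G] [DecidableEq G]
    (A B : Finset G)
    (hA1 : (1 : G) ∉ A) (hB1 : (1 : G) ∉ B)
    (hAinv : ∀ a ∈ A, a⁻¹ ∈ A) (hBinv : ∀ b ∈ B, b⁻¹ ∈ B)
    (hAgen : Subgroup.closure (A : Set G) = ⊤) (hBgen : Subgroup.closure (B : Set G) = ⊤)
    (htnc : ∀ (g : G), ∀ a ∈ A, ∀ b ∈ B, g * a * g⁻¹ ≠ b)
    (lam : ℝ) (hlam : 0 ≤ lam)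
    (h2a : IsLeftCayleyExpander A lam) (h2b : IsRightCayleyExpander B lam) :
    -- (i) ugr(X, w) is a λ-expander ...
    (∀ (μ : ℝ) (f : G → ℝ), f ≠ 0 → (∑ g : G, f g) = 0 →
      (∀ g : G, ((∑ a ∈ A, f (a * g)) / (A.card : ℝ) +
          (∑ b ∈ B, f (g * b)) / (B.card : ℝ)) / 2 = μ * f g) → μ ≤ lam) ∧
    -- ... and in particular a (λ, 1)-skeleton expander
    (∀ U : Finset G,
      ((aEdgesIn A U).card : ℝ) / ((A.card : ℝ) * (Fintype.card G : ℝ)) +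
          ((bEdgesIn B U).card : ℝ) / ((B.card : ℝ) * (Fintype.card G : ℝ)) ≤
        lam * ((U.card : ℝ) / (Fintype.card G : ℝ)) +
          ((U.card : ℝ) / (Fintype.card G : ℝ)) ^ 2) ∧
    -- (ii) NNI^{1,1,2}(X, w) is a (2λ, 4·max(|A|,|B|))-skeleton expander ...
    (∀ U : Finset (Finset G), U ⊆ xEdges A B →
      (((nniEdges A B).filter fun pr => pr ⊆ U).card : ℝ) *
          (4 / ((A.card : ℝ) * (B.card : ℝ) * (Fintype.card G : ℝ))) ≤
        2 * lam * (∑ e ∈ U, edgeWeight A B e) +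
          4 * max (A.card : ℝ) (B.card : ℝ) * (∑ e ∈ U, edgeWeight A B e) ^ 2) ∧
    -- ... and consequently so is NI^{1,1,2}(X, w)
    (∀ U : Finset (Finset G), U ⊆ xEdges A B →
      (((xSquares A B).filter fun s => ∃ e₁ ∈ U, ∃ e₂ ∈ U, e₁ ≠ e₂ ∧
            ({e₁, e₂} : Finset (Finset G)) ∈ nniEdges A B ∧ e₁ ∪ e₂ = s).card : ℝ) *
          (4 / ((A.card : ℝ) * (B.card : ℝ) * (Fintype.card G : ℝ))) ≤
        2 * lam * (∑ e ∈ U, edgeWeight A B e) +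
          4 * max (A.card : ℝ) (B.card : ℝ) * (∑ e ∈ U, edgeWeight A B e) ^ 2) := by
  have hL : ∀ s : G, (Equiv.mulLeft s).symm = Equiv.mulLeft s⁻¹ := by intro s; ext; simp
  have hR : ∀ s : G, (Equiv.mulRight s).symm = Equiv.mulRight s⁻¹ := by intro s; ext; simp
  have hLf : ∀ s ∈ A, ∀ g : G, Equiv.mulLeft s g ≠ g := by
    intro s hs g hh
    apply hA1
    have : s = 1 := by simpa using hh
    rwa [this] at hs
  have hRf : ∀ s ∈ B, ∀ g : G, Equiv.mulRight s g ≠ g := by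
    intro s hs g hh
    apply hB1
    have : s = 1 := by simpa using hh
    rwa [this] at hs
  have hne : ∀ s ∈ A, ∀ t ∈ B, ∀ g : G, s * g ≠ g * t := by
    intro s hs t ht g hh
    apply htnc g⁻¹ s hs t ht
    rw [inv_inv, mul_assoc, hh, inv_mul_cancel_left]
  have hn : (0 : ℝ) < Fintype.card G := by exact_mod_cast Fintype.card_pos
  -- degrees vanish together with the edges
  have hii : ∀ U : Finset (Finset G), U ⊆ xEdges A B →
      (((nniEdges A B).filter fun pr => pr ⊆ U).card : ℝ) *
          (4 / ((A.card : ℝ) * (B.card : ℝ) * (Fintype.card G : ℝ))) ≤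
        2 * lam * (∑ e ∈ U, edgeWeight A B e) +
          4 * max (A.card : ℝ) (B.card : ℝ) * (∑ e ∈ U, edgeWeight A B e) ^ 2 := by
    intro U hU
    set n : ℝ := (Fintype.card G : ℝ) with hnd
    set uA : ℝ := ((U.filter fun e => ∃ g : G, ∃ s ∈ A, e = {g, s * g}).card : ℝ) with huA
    set uB : ℝ := ((U.filter fun e => ∃ g : G, ∃ s ∈ B, e = {g, g * s}).card : ℝ) with huB
    have hfilt : (U.filter fun e => ¬ ∃ g : G, ∃ s ∈ A, e = {g, s * g}) =
        (U.filter fun e => ∃ g : G, ∃ s ∈ B, e = {g, g * s}) := by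
      apply Finset.filter_congr
      intro e he
      have hx := hU he
      simp only [xEdges, Finset.mem_filter, Finset.mem_univ, true_and] at hx
      constructor
      · intro h; exact hx.resolve_left h
      · rintro ⟨g, b, hb, rfl⟩ ⟨g', a, ha, hh⟩
        have m1 : g' ∈ ({g, g * b} : Finset G) := by rw [hh]; simp
        have m2 : a * g' ∈ ({g, g * b} : Finset G) := by rw [hh]; simp
        have n0 := hLf a ha g'
        simp only [Equiv.coe_mulLeft] at n0
        simp only [Finset.mem_insert, Finset.mem_singleton] at m1 m2
        rcases m1 with m1 | m1 <;> rcases m2 with m2 | m2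
        · exact n0 (m2.trans m1.symm)
        · rw [← m1] at m2; exact hne a ha b hb g' m2
        · apply hne a ha b⁻¹ (hBinv b hb) g'
          rw [m2, m1]; simp
        · exact n0 (m2.trans m1.symm)
    have hw : ∑ e ∈ U, edgeWeight A B e = uA / (A.card * n) + uB / (B.card * n) := by
      unfold edgeWeight
      rw [Finset.sum_ite, hfilt, Finset.sum_const, Finset.sum_const, nsmul_eq_mul, nsmul_eq_mul,
        mul_one_div, mul_one_div]
    rw [hw]
    set NN := (nniEdges A B).filter fun pr => pr ⊆ U with hNN
    set NA := NN.filter fun pr => ∃ g : G, ∃ a ∈ A, ∃ b ∈ B,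
      pr = {({g, a * g} : Finset G), ({g * b, a * g * b} : Finset G)} with hNA
    set NB := NN.filter fun pr => ∃ g : G, ∃ a ∈ A, ∃ b ∈ B,
      pr = {({g, g * b} : Finset G), ({a * g, a * g * b} : Finset G)} with hNB
    have hcov : NN ⊆ NA ∪ NB := by
      intro pr hpr
      have h1 := hpr
      simp only [hNN, nniEdges, Finset.mem_filter, Finset.mem_univ, true_and] at h1
      obtain ⟨⟨g, a, ha, b, hb, h2⟩, _⟩ := h1
      rw [Finset.mem_union]
      rcases h2 with h2 | h2
      · left; exact Finset.mem_filter.2 ⟨hpr, g, a, ha, b, hb, h2⟩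
      · right; exact Finset.mem_filter.2 ⟨hpr, g, a, ha, b, hb, h2⟩
    have hcard : (NN.card : ℝ) ≤ NA.card + NB.card := by
      exact_mod_cast (Finset.card_le_card hcov).trans (Finset.card_union_le _ _)
    have kA : 4 * (NA.card : ℝ) ≤ B.card * (2 * lam * uA + 4 * uA ^ 2 / n) := by
      apply FK9Aux.nni_count A B (fun s => Equiv.mulLeft s) (fun s => Equiv.mulRight s) hL hR
        hAinv hBinv (by intro s t g; simp [mul_assoc]) hLf hRf
        (by intro s hs t ht g; simpa using hne s hs t ht g)
        (by intro g s s' h; simpa using h) lam hlam h2b U NA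
      · intro pr hpr
        obtain ⟨h1, g, a, ha, b, hb, h2⟩ := Finset.mem_filter.1 hpr
        exact ⟨(Finset.mem_filter.1 h1).2, g, a, ha, b, hb, h2⟩
      · rw [huA]; congr!
    have kB : 4 * (NB.card : ℝ) ≤ A.card * (2 * lam * uB + 4 * uB ^ 2 / n) := by
      apply FK9Aux.nni_count B A (fun s => Equiv.mulRight s) (fun s => Equiv.mulLeft s) hR hL
        hBinv hAinv (by intro s t g; simp [mul_assoc]) hRf hLf
        (by intro s hs t ht g; simpa using (hne t ht s hs g).symm)
        (by intro g s s' h; simpa using h) lam hlam h2a U NB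
      · intro pr hpr
        obtain ⟨h1, g, a, ha, b, hb, h2⟩ := Finset.mem_filter.1 hpr
        refine ⟨(Finset.mem_filter.1 h1).2, g, b, hb, a, ha, ?_⟩
        rw [h2]
        simp only [Equiv.coe_mulLeft, Equiv.coe_mulRight, mul_assoc]
      · rw [huB]; simp only [Equiv.coe_mulRight]; congr!
    have hA0 : 0 ≤ uA := Nat.cast_nonneg _
    have hB0 : 0 ≤ uB := Nat.cast_nonneg _
    rcases A.eq_empty_or_nonempty with hAe | hAe
    · have : (A.card : ℝ) = 0 := by simp [hAe]
      rw [this]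
      simp only [zero_mul, div_zero, mul_zero]
      positivity
    rcases B.eq_empty_or_nonempty with hBe | hBe
    · have : (B.card : ℝ) = 0 := by simp [hBe]
      rw [this]
      simp only [zero_mul, mul_zero, div_zero]
      positivity
    have hAp : (0 : ℝ) < A.card := by exact_mod_cast hAe.card_pos
    have hBp : (0 : ℝ) < B.card := by exact_mod_cast hBe.card_pos
    clear_value uA uB n
    generalize (A.card : ℝ) = α at *
    generalize (B.card : ℝ) = β at *
    generalize (NN.card : ℝ) = x at *
    generalize (NA.card : ℝ) = y at *
    generalize (NB.card : ℝ) = z at *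
    have s1 : x * (4 / (α * β * n)) ≤
        (β * (2 * lam * uA + 4 * uA ^ 2 / n) + α * (2 * lam * uB + 4 * uB ^ 2 / n)) /
          (α * β * n) := by
      rw [mul_div_assoc']
      gcongr
      linarith
    refine s1.trans ?_
    have s2 : (β * (2 * lam * uA + 4 * uA ^ 2 / n) + α * (2 * lam * uB + 4 * uB ^ 2 / n)) /
          (α * β * n) = 2 * lam * (uA / (α * n) + uB / (β * n)) +
          4 * (α * (uA / (α * n)) ^ 2 + β * (uB / (β * n)) ^ 2) := by
      field_simp
      ring
    rw [s2]
    have p1 : 0 ≤ uA / (α * n) := by positivity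
    have p2 : 0 ≤ uB / (β * n) := by positivity
    generalize uA / (α * n) = v at *
    generalize uB / (β * n) = w at *
    have q1 : α * v ^ 2 ≤ max α β * v ^ 2 := by gcongr; exact le_max_left _ _
    have q2 : β * w ^ 2 ≤ max α β * w ^ 2 := by gcongr; exact le_max_right _ _
    have q3 : 0 ≤ max α β * (v * w) := by positivity
    nlinarith
  refine ⟨?_, ?_, hii, ?_⟩
  · intro μ f hf hsum heq
    have qa := FK9Aux.quad A (fun s => Equiv.mulLeft s) hL hAinv lam h2a f hsum
    have qb := FK9Aux.quad B (fun s => Equiv.mulRight s) hR hBinv lam h2b f hsum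
    have hpos : 0 < ∑ g, f g * f g := by
      obtain ⟨g, hg⟩ := Function.ne_iff.1 hf
      apply Finset.sum_pos' (fun i _ => mul_self_nonneg _)
      exact ⟨g, Finset.mem_univ _, mul_self_pos.2 hg⟩
    have e : 2 * (μ * ∑ g, f g * f g) =
        ∑ g, f g * FK9Aux.op A (fun s => Equiv.mulLeft s) f g +
        ∑ g, f g * FK9Aux.op B (fun s => Equiv.mulRight s) f g := by
      rw [← Finset.sum_add_distrib, Finset.mul_sum, Finset.mul_sum]
      apply Finset.sum_congr rfl
      intro g _
      have := heq g
      simp only [FK9Aux.op, Equiv.coe_mulLeft, Equiv.coe_mulRight]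
      linear_combination (-2 * f g) * this
    exact le_of_mul_le_mul_right (by linarith) hpos
  · intro U
    have ca := FK9Aux.edges_count A (fun s => Equiv.mulLeft s) hL hAinv hLf U (aEdgesIn A U)
      (by intro e he; exact (Finset.mem_filter.1 he).2)
    have cb := FK9Aux.edges_count B (fun s => Equiv.mulRight s) hR hBinv hRf U (bEdgesIn B U)
      (by intro e he; exact (Finset.mem_filter.1 he).2)
    have ia := FK9Aux.ind_bound A (fun s => Equiv.mulLeft s) hL hAinv lam hlam h2a U
    have ib := FK9Aux.ind_bound B (fun s => Equiv.mulRight s) hR hBinv lam hlam h2b U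
    have ta := le_trans (by exact_mod_cast ca : 2 * ((aEdgesIn A U).card : ℝ) ≤ _) ia
    have tb := le_trans (by exact_mod_cast cb : 2 * ((bEdgesIn B U).card : ℝ) ≤ _) ib
    have gen : ∀ x k p n : ℝ, 0 ≤ k → 0 < n → 0 ≤ p →
        2 * x ≤ k * (lam * p + p ^ 2 / n) →
        x / (k * n) ≤ (lam * (p / n) + (p / n) ^ 2) / 2 := by
      intro x k p n hk hn hp hx
      rcases hk.eq_or_lt with rfl | hk
      · simp only [zero_mul, div_zero]; positivity
      rw [div_le_iff₀ (by positivity)]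
      have : (lam * (p / n) + (p / n) ^ 2) / 2 * (k * n) =
        k * (lam * p + p ^ 2 / n) / 2 := by field_simp
      rw [this]; linarith
    have ga := gen _ _ _ _ (Nat.cast_nonneg _) hn (Nat.cast_nonneg _) ta
    have gb := gen _ _ _ _ (Nat.cast_nonneg _) hn (Nat.cast_nonneg _) tb
    linarith
  · intro U hU
    refine le_trans ?_ (hii U hU)
    apply mul_le_mul_of_nonneg_right _ (by positivity)
    norm_cast
    apply Finset.card_le_card_of_surjOn (fun pr => pr.sup id)
    intro s hs
    rw [Finset.mem_coe, Finset.mem_filter] at hs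
    obtain ⟨_, e₁, h1, e₂, h2, _, hm, hs⟩ := hs
    refine ⟨{e₁, e₂}, ?_, ?_⟩
    · rw [Finset.mem_coe, Finset.mem_filter]
      refine ⟨hm, ?_⟩
      intro e he
      simp only [Finset.mem_insert, Finset.mem_singleton] at he
      rcases he with rfl | rfl <;> assumption
    · simpa using hs
end
end
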